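/- arXiv:2203.11982 — 6 statements merged into one kernel-verified Lean document; each statement's English description precedes it below -/
import Mathlib

section
/- Let Γ ⊆ ℂ^g be an R-submodule of ℂ^g (under coordinatewise multiplication by elements of R) which is a ℤ-lattice in ℂ^g ≅ ℝ^{2g} (discrete and spanning over ℝ). Then there exists a positive definite hermitian matrix M ∈ M_g(ℂ) such that Im(∑_{i,j} γᵢ·M_{ij}·conj(γ'ⱼ)) ∈ ℤ for all γ, γ' ∈ Γ. (Every such Γ is a polarizable lattice.) -/
open NumberField
open scoped ComplexOrder

theorem aux_torsion {ι E : Type*} [NormedAddCommGroup E] [NormedSpace ℝ E] [FiniteDimensional ℝ E]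
    [Fintype ι] (b : Module.Basis ι ℝ E) (Γ : AddSubgroup E) (hd : DiscreteTopology Γ)
    (hb : ∀ i, b i ∈ Γ) :
    ∃ N : ℕ, 0 < N ∧ ∀ γ ∈ Γ, N • γ ∈ Submodule.span ℤ (Set.range b) := by
  have : ProperSpace E := FiniteDimensional.proper ℝ E
  have hle : ∀ x ∈ Submodule.span ℤ (Set.range b), x ∈ Γ := by
    intro x hx
    have : Submodule.span ℤ (Set.range b) ≤ AddSubgroup.toIntSubmodule Γ := by
      rw [Submodule.span_le]
      rintro _ ⟨i, rfl⟩
      exact hb i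
    exact this hx
  have hfin : Set.Finite (ZSpan.fundamentalDomain b ∩ (Γ : Set E)) :=
    Metric.finite_isBounded_inter_isClosed DiscreteTopology.isDiscrete
      (ZSpan.fundamentalDomain_isBounded b) AddSubgroup.isClosed_of_discrete
  let L : AddSubgroup Γ := (Submodule.span ℤ (Set.range b)).toAddSubgroup.addSubgroupOf Γ
  have := hfin.to_subtype
  have : Finite (Γ ⧸ L) := by
    let f : Γ ⧸ L → ↥(ZSpan.fundamentalDomain b ∩ (Γ : Set E)) := fun q =>
      ⟨ZSpan.fract b (q.out : E), ZSpan.fract_mem_fundamentalDomain b _, by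
        rw [ZSpan.fract_apply]
        exact Γ.sub_mem q.out.2 (hle _ (ZSpan.floor b _).2)⟩
    refine Finite.of_injective f fun q r h => ?_
    have h1 := Subtype.ext_iff.1 h
    simp only [f] at h1
    rw [ZSpan.fract_eq_fract] at h1
    rw [← QuotientAddGroup.out_eq' q, ← QuotientAddGroup.out_eq' r, QuotientAddGroup.eq,
      AddSubgroup.mem_addSubgroupOf]
    exact h1
  refine ⟨L.index, Nat.pos_of_ne_zero AddSubgroup.index_ne_zero_of_finite, fun γ hγ => ?_⟩
  have := L.nsmul_index_mem ⟨γ, hγ⟩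
  rw [AddSubgroup.mem_addSubgroupOf] at this
  exact this

theorem aux_alpha (K : Type*) [Field K] [NumberField K] (hcplx : IsEmpty (K →+* ℝ)) (τ : K →+* ℂ) :
    ∃ a : 𝓞 K, (τ (algebraMap (𝓞 K) K a)).im ≠ 0 := by
  by_contra! h
  have hr : ComplexEmbedding.IsReal τ := by
    rw [ComplexEmbedding.isReal_iff]
    ext x
    obtain ⟨a, b, hb, rfl⟩ := IsFractionRing.div_surjective (A := 𝓞 K) x
    have e : ∀ a : 𝓞 K, starRingEnd ℂ (τ (algebraMap (𝓞 K) K a)) = τ (algebraMap (𝓞 K) K a) :=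
      fun a => Complex.conj_eq_iff_im.2 (h a)
    rw [ComplexEmbedding.conjugate_coe_eq, map_div₀, map_div₀, e, e]
  exact hcplx.false hr.embedding

/-- Every `R`-submodule `Γ` of `ℂ^g` (coordinatewise multiplication,
`R = τ(𝓞 K)`) which is a `ℤ`-lattice is polarizable: there is a positive definite hermitian
matrix `M` such that the associated hermitian form takes values with integral imaginary part
on `Γ × Γ`. -/
theorem stmt_9
    (K : Type*) [Field K] [NumberField K]
    (hdeg : Module.finrank ℚ K = 2)
    (hcplx : IsEmpty (K →+* ℝ))
    (τ : K →+* ℂ)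
    (g : ℕ)
    (Γ : AddSubgroup (Fin g → ℂ))
    (hmod : ∀ r ∈ Set.range (fun a : 𝓞 K => τ (algebraMap (𝓞 K) K a)),
      ∀ γ ∈ Γ, (fun i => r * γ i) ∈ Γ)
    (hdisc : DiscreteTopology Γ)
    (hspan : Submodule.span ℝ (Γ : Set (Fin g → ℂ)) = ⊤) :
    ∃ M : Matrix (Fin g) (Fin g) ℂ, M.PosDef ∧
      ∀ γ ∈ Γ, ∀ γ' ∈ Γ,
        ∃ n : ℤ, (∑ i, ∑ j, γ i * M i j * starRingEnd ℂ (γ' j)).im = n := by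
  obtain ⟨a, ha⟩ := aux_alpha K hcplx τ
  set α := τ (algebraMap (𝓞 K) K a) with hα
  have hspanC : Submodule.span ℂ (Γ : Set (Fin g → ℂ)) = ⊤ := by
    rw [eq_top_iff]
    intro x _
    have : x ∈ Submodule.span ℝ (Γ : Set (Fin g → ℂ)) := hspan ▸ Submodule.mem_top
    exact Submodule.span_subset_span ℝ ℂ _ this
  obtain ⟨s, hsΓ, hs, hli⟩ := exists_linearIndependent ℂ (Γ : Set (Fin g → ℂ))
  let e : Module.Basis s ℂ (Fin g → ℂ) := Module.Basis.mk hli (by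
    rw [Subtype.range_coe, hs, hspanC])
  have he : ∀ i, e i ∈ Γ := fun i => by
    simp only [e, Module.Basis.mk_apply]; exact hsΓ i.2
  clear_value e
  have : Fintype s := FiniteDimensional.fintypeBasisIndex e
  have hli2 : LinearIndependent ℝ ![(1 : ℂ), α] := by
    rw [LinearIndependent.pair_iff]
    intro x y h
    have h2 := congrArg Complex.im h
    have h1 := congrArg Complex.re h
    simp [ha] at h1 h2
    simpa [h2] using h1
  let c : Module.Basis (Fin 2) ℝ ℂ := basisOfLinearIndependentOfCardEqFinrank hli2 (by simp)
  have hc : ⇑c = ![1, α] := by simp [c]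
  clear_value c
  obtain ⟨N, hN, hNΓ⟩ := aux_torsion (c.smulTower e) Γ hdisc (by
    rintro ⟨i, j⟩
    rw [Module.Basis.smulTower_apply, hc]
    fin_cases i
    · simpa using he j
    · exact hmod α ⟨a, rfl⟩ _ (he j))
  have key : ∀ γ ∈ Γ, ∀ k, ∃ p q : ℤ, (N : ℂ) * e.repr γ k = p + q * α := by
    intro γ hγ k
    have h := (Module.Basis.mem_span_iff_repr_mem ℤ _ _).1 (hNΓ γ hγ)
    obtain ⟨p, hp⟩ := h (0, k)
    obtain ⟨q, hq⟩ := h (1, k)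
    rw [Module.Basis.smulTower_repr_mk] at hp hq
    refine ⟨p, q, ?_⟩
    have h3 := c.sum_repr (e.repr (N • γ) k)
    rw [Fin.sum_univ_two, ← hp, ← hq, hc] at h3
    rw [map_nsmul, Finsupp.smul_apply, nsmul_eq_mul] at h3
    simp at h3
    exact h3.symm
  let A : Matrix s (Fin g) ℂ := fun k i => starRingEnd ℂ (e.repr (Pi.single i 1) k)
  have hAa : ∀ k i, A k i = starRingEnd ℂ (e.repr (Pi.single i 1) k) := fun _ _ => rfl
  have hA : ∀ (γ : Fin g → ℂ) k, e.repr γ k = ∑ i, γ i * e.repr (Pi.single i 1) k := by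
    intro γ k
    conv_lhs => rw [pi_eq_sum_univ' γ]
    simp [Finsupp.finsetSum_apply]
  have hAv : ∀ (v : Fin g → ℂ) k, A.mulVec v k = starRingEnd ℂ (e.repr (star v) k) := by
    intro v k
    rw [hA]
    simp [A, Matrix.mulVec, dotProduct, mul_comm]
  have hinj : Function.Injective A.mulVec := by
    intro v w h
    apply star_injective
    apply e.repr.injective
    ext k
    have := congrFun h k
    rw [hAv, hAv] at this
    exact (starRingEnd ℂ).injective this
  let t : ℝ := N ^ 2 / |α.im|
  have ht : 0 < t := by positivity
  refine ⟨(t : ℂ) • (A.conjTranspose * A), ?_, ?_⟩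
  · exact (Matrix.PosDef.conjTranspose_mul_self A hinj).smul (by exact_mod_cast ht)
  · intro γ hγ γ' hγ'
    have hsum : ∑ i, ∑ j, γ i * ((t : ℂ) • (A.conjTranspose * A)) i j * starRingEnd ℂ (γ' j)
        = ∑ k, t * (e.repr γ k * starRingEnd ℂ (e.repr γ' k)) := by
      simp_rw [hA γ, hA γ', map_sum, Finset.sum_mul_sum, Finset.mul_sum]
      simp only [Matrix.smul_apply, Matrix.mul_apply, Matrix.conjTranspose_apply, hAa, smul_eq_mul,
        Finset.mul_sum, Finset.sum_mul, map_mul, RCLike.star_def, Complex.conj_conj]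
      conv_rhs => rw [Finset.sum_comm]
      refine Finset.sum_congr rfl fun i _ => ?_
      conv_rhs => rw [Finset.sum_comm]
      refine Finset.sum_congr rfl fun j _ => Finset.sum_congr rfl fun k _ => ?_
      ring
    rw [hsum, Complex.im_sum]
    have hk : ∀ k, ∃ n : ℤ, ((t : ℂ) * (e.repr γ k * starRingEnd ℂ (e.repr γ' k))).im = n := by
      intro k
      obtain ⟨p, q, h⟩ := key γ hγ k
      obtain ⟨p', q', h'⟩ := key γ' hγ' k
      have h5 : ((t : ℂ) * (e.repr γ k * starRingEnd ℂ (e.repr γ' k))).im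
          = (1 / |α.im|) * ((N * e.repr γ k) * starRingEnd ℂ (N * e.repr γ' k)).im := by
        rw [map_mul, Complex.conj_natCast]
        rw [show (N * e.repr γ k) * (N * starRingEnd ℂ (e.repr γ' k)) =
          (((N : ℝ) ^ 2 : ℝ) : ℂ) * (e.repr γ k * starRingEnd ℂ (e.repr γ' k)) by push_cast; ring]
        rw [Complex.im_ofReal_mul, Complex.im_ofReal_mul]
        simp only [t]
        ring
      have h6 : (((p : ℂ) + q * α) * starRingEnd ℂ (p' + q' * α)).im
          = (q * p' - p * q') * α.im := by
        simp
        ring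
      rw [h5, h, h', h6]
      rcases abs_cases α.im with ⟨h7, _⟩ | ⟨h7, _⟩
      · refine ⟨q * p' - p * q', ?_⟩
        rw [h7]; push_cast; field_simp
      · refine ⟨-(q * p' - p * q'), ?_⟩
        rw [h7]; push_cast; field_simp
    choose n hn using hk
    exact ⟨∑ k, n k, by rw [Int.cast_sum]; exact Finset.sum_congr rfl fun k _ => hn k⟩
end

section
/- Let Λ₁, …, Λ_g and Λ'₁, …, Λ'_{g'} be lattices in ℂ, each with complex multiplication by R and each with g₂ and g₃ algebraic over ℚ. Let M be a g'×g complex matrix such that for every γ ∈ ℂ^g with γᵢ ∈ Λᵢ for all i, the vector M·γ satisfies (M·γ)ⱼ ∈ Λ'ⱼ for all j. Then every entry of M is algebraic over ℚ. -/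
open NumberField

/-- The Eisenstein series `g₂` of an additive subgroup of `ℂ`. -/
noncomputable def g₂ (Λ : AddSubgroup ℂ) : ℂ :=
  60 * ∑' w : {w : ℂ // w ∈ Λ ∧ w ≠ 0}, ((w : ℂ) ^ 4)⁻¹

/-- The Eisenstein series `g₃` of an additive subgroup of `ℂ`. -/
noncomputable def g₃ (Λ : AddSubgroup ℂ) : ℂ :=
  140 * ∑' w : {w : ℂ // w ∈ Λ ∧ w ≠ 0}, ((w : ℂ) ^ 6)⁻¹

section HelpersA
open Polynomial in
theorem exists_aut (α β : ℂ) (hα : ¬ IsAlgebraic ℚ α) (hβ : ¬ IsAlgebraic ℚ β) :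
    ∃ σ : ℂ ≃+* ℂ, (∀ x, IsAlgebraic ℚ x → σ x = x) ∧ σ α = β := by
  classical
  let R := algebraicClosure ℚ ℂ
  haveI : Algebra.IsAlgebraic ℚ R := algebraicClosure.isAlgebraic ℚ ℂ
  have key : ∀ γ : ℂ, ¬ IsAlgebraic ℚ γ → ∃ t : Set ℂ, γ ∈ t ∧ IsTranscendenceBasis R ((↑) : t → ℂ) := by
    intro γ hγ
    have h1 : Transcendental R γ := fun h => hγ (h.restrictScalars ℚ)
    have h2 : AlgebraicIndepOn R id ({γ} : Set ℂ) := by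
      have := (algebraicIndependent_unique_type_iff (R := R) (A := ℂ)
        (x := fun i : ({γ} : Set ℂ) => id i.1)).2 (by simpa using h1)
      exact this
    obtain ⟨t, ht, hb⟩ := exists_isTranscendenceBasis_superset h2
    exact ⟨t, ht rfl, hb⟩
  obtain ⟨s, hs, hsb⟩ := key α hα
  obtain ⟨t, ht, htb⟩ := key β hβ
  obtain ⟨e0⟩ : Nonempty (s ≃ t) := by
    rw [← Cardinal.eq]
    exact hsb.cardinalMk_eq htb
  let e : s ≃ t := e0.setValue ⟨α, hs⟩ ⟨β, ht⟩
  have he : e ⟨α, hs⟩ = ⟨β, ht⟩ := Equiv.setValue_eq _ _ _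
  have hwb : IsTranscendenceBasis R (fun i : s => (e i : ℂ)) := 
    (isTranscendenceBasis_equiv e (f := ((↑) : t → ℂ))).2 htb
  let w : s → ℂ := fun i => (e i : ℂ)
  let _ := IsAlgClosed.isAlgClosure_of_transcendence_basis _ hsb
  let _ := IsAlgClosed.isAlgClosure_of_transcendence_basis w hwb
  let E : Algebra.adjoin R (Set.range ((↑) : s → ℂ)) ≃ₐ[R] Algebra.adjoin R (Set.range w) :=
    hsb.1.aevalEquiv.symm.trans hwb.1.aevalEquiv
  have hE : ∀ x, IsAlgClosure.equivOfEquiv ℂ ℂ E.toRingEquiv (algebraMap _ ℂ x) = algebraMap _ ℂ (E x) :=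
    fun x => IsAlgClosure.equivOfEquiv_algebraMap ℂ ℂ E.toRingEquiv x
  refine ⟨IsAlgClosure.equivOfEquiv ℂ ℂ E.toRingEquiv, ?_, ?_⟩
  · intro x hx
    let y : R := ⟨x, mem_algebraicClosure_iff.2 hx⟩
    have := hE (algebraMap R _ y)
    rw [E.commutes] at this
    exact this
  · have h3 : hsb.1.aevalEquiv (MvPolynomial.X ⟨α, hs⟩) =
        ⟨α, Algebra.subset_adjoin ⟨⟨α, hs⟩, rfl⟩⟩ := by
      apply Subtype.ext
      simp
    have := hE ⟨α, Algebra.subset_adjoin ⟨⟨α, hs⟩, rfl⟩⟩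
    rw [← h3] at this
    simp only [E, AlgEquiv.trans_apply, AlgEquiv.symm_apply_apply] at this
    simpa [he, w] using this

end HelpersA

section HelpersC
open Filter Topology

theorem wp_anal (L : PeriodPair) {z : ℂ} (hz : z ∉ L.lattice) : AnalyticAt ℂ L.weierstrassP z :=
  L.analyticOnNhd_weierstrassP z hz

theorem wp_except (L : PeriodPair) (z : ℂ) (hz : z ≠ 0) :
    z ^ 2 * L.weierstrassP z = 1 + z ^ 2 * L.weierstrassPExcept 0 z := by
  have := L.weierstrassPExcept_def 0 z
  simp only [ZeroMemClass.coe_zero, sub_zero] at this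
  rw [this]; field_simp; ring

theorem evenPoly (L : PeriodPair) (n : ℕ) : ∀ f : ℂ → ℂ, Meromorphic f → (∀ z, f (-z) = f z) →
    (∀ z, ∀ l ∈ L.lattice, f (z + l) = f z) →
    (∀ z, z ∉ L.lattice → 0 ≤ meromorphicOrderAt f z) → (((-n : ℤ) : WithTop ℤ) ≤ meromorphicOrderAt f 0) →
    ∃ P : Polynomial ℂ, ∀ᶠ z in 𝓝[≠] 0, f z = P.eval (L.weierstrassP z) := by
  induction n with
  | zero =>
    intro f hf heven hper hord h0
    have hall : ∀ z, 0 ≤ meromorphicOrderAt f z := by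
      intro z
      by_cases hz : z ∈ L.lattice
      · have h := meromorphicOrderAt_comp_add_const_eq_meromorphicOrderAt (f := f) (c := z) (x := 0)
        rw [zero_add] at h
        rw [← h]
        have : f ∘ (· + z) = f := by ext w; exact hper w z hz
        rw [this]; simpa using h0
      · exact hord z hz
    choose g hg hfg using fun z => (hf z).meromorphicOrderAt_nonneg_iff.1 (hall z)
    let G : ℂ → ℂ := fun z => g z z
    have hGg : ∀ z, G =ᶠ[𝓝 z] g z := by
      intro z
      have h1 : ∀ᶠ w in 𝓝[≠] z, f w = g z w ∧ AnalyticAt ℂ (g z) w := 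
        (hfg z).and ((hg z).eventually_analyticAt.filter_mono nhdsWithin_le_nhds)
      rw [← nhdsNE_sup_pure z]
      refine Filter.eventually_sup.2 ⟨?_, by simp [G]⟩
      have h3 : ∀ᶠ w in 𝓝[≠] z, ∀ᶠ y in 𝓝[≠] w, f y = g z y := by
        obtain ⟨s, hs, hso, hzs⟩ := eventually_nhds_iff.1 (eventually_nhdsWithin_iff.1 h1)
        have hsz : s \ {z} ∈ 𝓝[≠] z := sdiff_mem_nhdsWithin_compl (hso.mem_nhds hzs) _
        filter_upwards [hsz] with w hw
        have : s \ {z} ∈ 𝓝 w := (hso.sdiff isClosed_singleton).mem_nhds hw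
        filter_upwards [mem_nhdsWithin_of_mem_nhds this] with y hy
        exact (hs y hy.1 hy.2).1
      filter_upwards [h1, h3] with w hw hw3
      -- g w w = g z w as limits
      have e : g w =ᶠ[𝓝[≠] w] g z := by
        filter_upwards [hfg w, hw3] with y h1 h2; rw [← h1, h2]
      have := (ContinuousAt.eventuallyEq_nhds_iff_eventuallyEq_nhdsNE (hg w).continuousAt hw.2.continuousAt).1 e
      exact this.self_of_nhds
    have hGa : ∀ z, AnalyticAt ℂ G z := fun z => (hg z).congr (hGg z).symm
    have hfG : ∀ z, f =ᶠ[𝓝[≠] z] G := fun z => (hfg z).trans ((hGg z).filter_mono nhdsWithin_le_nhds).symm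
    have hd : Differentiable ℂ G := fun z => (hGa z).differentiableAt
    have hGper : ∀ z w, w ∈ L.lattice → G (z + w) = G z := by
      intro z w hw
      have ht : Tendsto (fun y => y + w) (𝓝[≠] z) (𝓝[≠] (z + w)) := by
        refine tendsto_nhdsWithin_of_tendsto_nhds_of_eventually_within _ ?_ ?_
        · exact ((continuous_id.add continuous_const).tendsto' z _ rfl).mono_left nhdsWithin_le_nhds
        · filter_upwards [self_mem_nhdsWithin] with y hy
          simpa using hy
      have e : (fun y => G (y + w)) =ᶠ[𝓝[≠] z] G := by
        filter_upwards [ht.eventually (hfG (z + w)), hfG z] with y h1 h2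
        rw [← h1, ← h2, hper y w hw]
      have hc : ContinuousAt (fun y => G (y + w)) z := by
        have := hd.continuous; fun_prop
      exact ((ContinuousAt.eventuallyEq_nhds_iff_eventuallyEq_nhdsNE hc (hGa z).continuousAt).1 e).self_of_nhds
    have hconst := fun z => hd.apply_eq_apply_of_bounded
      (IsZLattice.isCompact_range_of_periodic L.lattice _ hd.continuous hGper).isBounded z 0
    refine ⟨Polynomial.C (G 0), ?_⟩
    filter_upwards [hfG 0] with z hz
    rw [hz, hconst z]; simp
  | succ n ih =>
    intro f hf heven hper hord h0
    by_cases h1 : ((-n : ℤ) : WithTop ℤ) ≤ meromorphicOrderAt f 0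
    · exact ih f hf heven hper hord h1
    have hlt := not_le.1 h1
    obtain ⟨m, hm⟩ := WithTop.ne_top_iff_exists.1 (ne_top_of_lt hlt)
    rw [← hm] at hlt h0
    have hm' : m = -(n+1 : ℤ) := by
      have a := WithTop.coe_lt_coe.1 hlt
      have b := WithTop.coe_le_coe.1 h0
      push_cast at b; omega
    obtain ⟨h, hh, hh0, hfh⟩ := (meromorphicOrderAt_eq_int_iff (hf 0)).1 hm.symm
    simp only [sub_zero, smul_eq_mul] at hfh
    have hev : Even (n + 1) := by
      by_contra hodd
      rw [Nat.not_even_iff_odd] at hodd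
      have hodd' : Odd m := by rw [hm']; exact (by exact_mod_cast hodd : Odd ((n:ℤ) + 1)).neg
      have ht : Tendsto (fun y : ℂ => -y) (𝓝[≠] 0) (𝓝[≠] 0) := by
        refine tendsto_nhdsWithin_of_tendsto_nhds_of_eventually_within _ ?_ ?_
        · exact (continuous_neg.tendsto' (0:ℂ) 0 neg_zero).mono_left nhdsWithin_le_nhds
        · filter_upwards [self_mem_nhdsWithin] with y hy
          simpa using hy
      have e : (fun z => - h (-z)) =ᶠ[𝓝[≠] 0] h := by
        filter_upwards [hfh, ht.eventually hfh, self_mem_nhdsWithin] with z h1 h2 hz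
        have hz : z ≠ 0 := hz
        rw [heven, h1, hodd'.neg_zpow] at h2
        have : z ^ m ≠ 0 := zpow_ne_zero _ hz
        have h3 : z ^ m * h z = z ^ m * (- h (-z)) := by linear_combination h2
        exact (mul_left_cancel₀ this h3).symm
      have hc : ContinuousAt (fun z => - h (-z)) 0 := by
        have : ContinuousAt h (-0) := by simpa using hh.continuousAt
        exact (ContinuousAt.comp this continuousAt_neg).neg
      have := ((ContinuousAt.eventuallyEq_nhds_iff_eventuallyEq_nhdsNE hc hh.continuousAt).1 e).self_of_nhds
      simp only [neg_zero] at this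
      apply hh0
      linear_combination (-1/2 : ℂ) * this
    obtain ⟨k, hk⟩ := hev
    let F : ℂ → ℂ := fun z => f z - h 0 * L.weierstrassP z ^ k
    have hFm : Meromorphic F := by
      have := L.meromorphic_weierstrassP
      fun_prop
    obtain ⟨P, hP⟩ := ih F hFm (fun z => by simp [F, heven]) (fun z l hl => by
        simp only [F, hper z l hl, L.weierstrassP_add_coe z ⟨l, hl⟩]) (fun z hz => by
        obtain ⟨g, hg, hfg⟩ := (hf z).meromorphicOrderAt_nonneg_iff.1 (hord z hz)
        refine (hFm z).meromorphicOrderAt_nonneg_iff.2 ⟨fun z => g z - h 0 * L.weierstrassP z ^ k, ?_, ?_⟩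
        · have := wp_anal L hz
          fun_prop
        · filter_upwards [hfg] with y hy
          simp only [F, hy]) (by
        let q : ℂ → ℂ := fun z => h z - h 0 * (1 + z ^ 2 * L.weierstrassPExcept 0 z) ^ k
        have hq : AnalyticAt ℂ q 0 := by
          have := L.analyticAt_weierstrassPExcept 0
          fun_prop
        have hq0 : q 0 = 0 := by simp [q]
        have e : F =ᶠ[𝓝[≠] 0] fun z => z ^ m * q z := by
          filter_upwards [hfh, self_mem_nhdsWithin] with z hz hz0
          have hz0 : z ≠ 0 := hz0
          simp only [F, q, hz]
          rw [← wp_except L z hz0, mul_pow, ← pow_mul]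
          have : z ^ m * z ^ (2 * k) = 1 := by
            rw [← zpow_natCast, ← zpow_add₀ hz0]
            have : m + ((2 * k : ℕ) : ℤ) = 0 := by push_cast; omega
            rw [this, zpow_zero]
          linear_combination (h 0 * L.weierstrassP z ^ k) * this
        rw [meromorphicOrderAt_congr e, fun_meromorphicOrderAt_mul (by fun_prop) hq.meromorphicAt]
        have h1 : meromorphicOrderAt (fun z : ℂ => z ^ m) 0 = m := by
          simpa using fun_meromorphicOrderAt_zpow_id_sub_const (𝕜 := ℂ) (x := 0) (n := m)
        have h2 : (1 : WithTop ℤ) ≤ meromorphicOrderAt q 0 := by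
          have : 0 < meromorphicOrderAt q 0 := by
            refine (tendsto_zero_iff_meromorphicOrderAt_pos hq.meromorphicAt).1 ?_
            have := hq.continuousAt.tendsto
            rw [hq0] at this
            exact this.mono_left nhdsWithin_le_nhds
          revert this
          generalize meromorphicOrderAt q 0 = o
          intro ho
          cases o with
          | top => exact le_top
          | coe a => 
            have : 0 < a := by exact_mod_cast ho
            exact_mod_cast (by omega : 1 ≤ a)
        rw [h1]
        calc ((-n : ℤ) : WithTop ℤ) = (m : WithTop ℤ) + 1 := by
              have : (-n : ℤ) = m + 1 := by omega
              rw [this]; rfl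
          _ ≤ _ := by gcongr)
    refine ⟨P + Polynomial.C (h 0) * Polynomial.X ^ k, ?_⟩
    filter_upwards [hP] with z hz
    simp only [F] at hz
    simp [← hz]

theorem exists_rel (L L' : PeriodPair) (α : ℂ) (hα : α ≠ 0) (hL : ∀ l ∈ L.lattice, α * l ∈ L'.lattice) :
    ∃ P Q : Polynomial ℂ, Q ≠ 0 ∧ ∀ᶠ z in 𝓝[≠] 0,
      P.eval (L.weierstrassP z) = L'.weierstrassP (α * z) * Q.eval (L.weierstrassP z) := by
  classical
  let S : Set ℂ := {c | (α * c ∈ L'.lattice ∧ c ∉ L.lattice) ∧ c ∈ ZSpan.fundamentalDomain L.basis}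
  have hS : S.Finite := by
    have hb : Bornology.IsBounded ((fun c => α * c) '' (ZSpan.fundamentalDomain L.basis)) := by
      have := (ZSpan.fundamentalDomain_isBounded L.basis)
      have h2 := this.smul₀ α
      exact h2
    have hfin := ZSpan.setFinite_inter L'.basis hb
    refine Set.Finite.of_finite_image (f := fun c => α * c) (hfin.subset ?_) 
      ((mul_right_injective₀ hα).injOn)
    rintro _ ⟨c, hc, rfl⟩
    refine ⟨⟨c, hc.2, rfl⟩, ?_⟩
    rw [← L'.lattice_eq_span_range_basis]
    exact hc.1.1
  let Q : Polynomial ℂ := ∏ c ∈ hS.toFinset, (Polynomial.X - Polynomial.C (L.weierstrassP c)) ^ 2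
  have hQ : Q ≠ 0 := Finset.prod_ne_zero_iff.2 fun c _ => pow_ne_zero _ (Polynomial.X_sub_C_ne_zero _)
  let v : ℂ → ℂ := fun z => L'.weierstrassP (α * z)
  let f : ℂ → ℂ := fun z => v z * Q.eval (L.weierstrassP z)
  have hvo : ∀ z, meromorphicOrderAt v z = meromorphicOrderAt L'.weierstrassP (α * z) := fun z =>
    meromorphicOrderAt_comp_of_deriv_ne_zero (f := L'.weierstrassP) (g := fun z => α * z) (by fun_prop)
      (by simpa [deriv_const_mul_field] using hα)
  have hv : Meromorphic v := by
    intro z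
    exact (L'.meromorphic_weierstrassP (α * z)).comp_analyticAt (g := fun z => α * z) (by fun_prop)
  have hu := L.meromorphic_weierstrassP
  have hQm : ∀ Q : Polynomial ℂ, Meromorphic (fun z => Q.eval (L.weierstrassP z)) := by
    intro Q
    simp only [Polynomial.eval_eq_sum_range]
    fun_prop
  have hf : Meromorphic f := fun z => (hv z).mul (hQm Q z)
  have hQa : ∀ (Q : Polynomial ℂ) z, z ∉ L.lattice → AnalyticAt ℂ (fun z => Q.eval (L.weierstrassP z)) z := by
    intro Q z hz
    have := wp_anal L hz
    simp only [Polynomial.eval_eq_sum_range]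
    fun_prop
  have hford : ∀ z, z ∉ L.lattice → 0 ≤ meromorphicOrderAt f z := by
    intro z hz
    by_cases hz' : α * z ∈ L'.lattice
    · -- representative
      obtain ⟨y, hy, -⟩ := ZSpan.exist_unique_vadd_mem_fundamentalDomain L.basis z
      have hyL : (y : ℂ) ∈ L.lattice := by rw [L.lattice_eq_span_range_basis]; exact y.2
      let c : ℂ := y + z
      have hc : c ∈ S := ⟨⟨by
        simp only [c, mul_add]; exact add_mem (hL _ hyL) hz', fun h => hz (by
          have := sub_mem h hyL
          simpa [c] using this)⟩, hy⟩
      have huc : L.weierstrassP c = L.weierstrassP z := by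
        simp only [c]; rw [add_comm]; exact L.weierstrassP_add_coe z ⟨y, hyL⟩
      let Q1 : Polynomial ℂ := ∏ c ∈ hS.toFinset.erase c, (Polynomial.X - Polynomial.C (L.weierstrassP c)) ^ 2
      have hQQ : Q = (Polynomial.X - Polynomial.C (L.weierstrassP c)) ^ 2 * Q1 :=
        (Finset.mul_prod_erase hS.toFinset (fun c => (Polynomial.X - Polynomial.C (L.weierstrassP c)) ^ 2)
          (hS.mem_toFinset.2 hc)).symm
      let d : ℂ → ℂ := fun w => L.weierstrassP w - L.weierstrassP z
      have hd : AnalyticAt ℂ d z := by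
        have := wp_anal L hz
        fun_prop
      have hd1 : (1 : WithTop ℤ) ≤ meromorphicOrderAt d z := by
        have : 0 < meromorphicOrderAt d z := by
          refine (tendsto_zero_iff_meromorphicOrderAt_pos hd.meromorphicAt).1 ?_
          have := hd.continuousAt.tendsto
          have h0 : d z = 0 := sub_self _
          rw [h0] at this
          exact this.mono_left nhdsWithin_le_nhds
        revert this
        generalize meromorphicOrderAt d z = o
        intro ho
        cases o with
        | top => exact le_top
        | coe a => 
          have : 0 < a := by exact_mod_cast ho
          exact_mod_cast (by omega : 1 ≤ a)
      have hfe : f = fun w => v w * (d w * d w * Q1.eval (L.weierstrassP w)) := by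
        ext w; simp only [f, hQQ, d, huc, Polynomial.eval_mul, Polynomial.eval_pow, Polynomial.eval_sub, Polynomial.eval_X, Polynomial.eval_C]; ring
      have hq1 := hQa Q1 z hz
      rw [hfe, fun_meromorphicOrderAt_mul (f := v) (g := fun w => d w * d w * Q1.eval (L.weierstrassP w))
          (hv z) ((hd.mul hd).mul hq1).meromorphicAt,
        fun_meromorphicOrderAt_mul (f := fun w => d w * d w) (g := fun w => Q1.eval (L.weierstrassP w))
          (hd.mul hd).meromorphicAt hq1.meromorphicAt,
        fun_meromorphicOrderAt_mul (f := d) (g := d) hd.meromorphicAt hd.meromorphicAt, hvo,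
        L'.order_weierstrassP _ hz']
      calc (0 : WithTop ℤ) = -2 + (1 + 1 + 0) := by rfl
        _ ≤ _ := by
          gcongr
          exact hq1.meromorphicOrderAt_nonneg
    · have h1 : AnalyticAt ℂ v z := by
        exact (wp_anal L' hz').fun_comp (f := fun z => α * z) (by fun_prop)
      exact (h1.mul (hQa Q z hz)).meromorphicOrderAt_nonneg
  have hex : ∃ n : ℕ, ((-n : ℤ) : WithTop ℤ) ≤ meromorphicOrderAt f 0 := by
    cases h : meromorphicOrderAt f 0 with
    | top => exact ⟨0, le_top⟩
    | coe a => exact ⟨a.natAbs, WithTop.coe_le_coe.2 (by omega)⟩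
  obtain ⟨n, hn⟩ := hex
  obtain ⟨P, hP⟩ := evenPoly L n f hf (fun z => by simp [f, v]) (fun z l hl => by
    simp only [f, v, L.weierstrassP_add_coe z ⟨l, hl⟩, mul_add,
      L'.weierstrassP_add_coe (α * z) ⟨_, hL l hl⟩]) hford hn
  refine ⟨P, Q, hQ, ?_⟩
  filter_upwards [hP] with z hz
  rw [← hz]

theorem mem_of_rel (L L' : PeriodPair) (β : ℂ) (hβ : β ≠ 0) (P Q : Polynomial ℂ) (hQ : Q ≠ 0)
    (h : ∀ᶠ z in 𝓝[≠] 0,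
      P.eval (L.weierstrassP z) = L'.weierstrassP (β * z) * Q.eval (L.weierstrassP z)) :
    ∀ l ∈ L.lattice, β * l ∈ L'.lattice := by
  intro l hl
  by_contra hcon
  let v : ℂ → ℂ := fun z => L'.weierstrassP (β * z)
  have hvo : ∀ z, meromorphicOrderAt v z = meromorphicOrderAt L'.weierstrassP (β * z) := fun z =>
    meromorphicOrderAt_comp_of_deriv_ne_zero (f := L'.weierstrassP) (g := fun z => β * z) (by fun_prop)
      (by simpa [deriv_const_mul_field] using hβ)
  have hv : Meromorphic v := by
    intro z
    exact (L'.meromorphic_weierstrassP (β * z)).comp_analyticAt (g := fun z => β * z) (by fun_prop)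
  have hu := L.meromorphic_weierstrassP
  have hQm : ∀ Q : Polynomial ℂ, Meromorphic (fun z => Q.eval (L.weierstrassP z)) := by
    intro Q
    simp only [Polynomial.eval_eq_sum_range]
    fun_prop
  let F : ℂ → ℂ := fun z => P.eval (L.weierstrassP z) - v z * Q.eval (L.weierstrassP z)
  have hF : Meromorphic F := fun z => (hQm P z).sub ((hv z).mul (hQm Q z))
  have h0 : meromorphicOrderAt F 0 = ⊤ := by
    rw [meromorphicOrderAt_eq_top_iff]
    filter_upwards [h] with z hz
    exact sub_eq_zero.2 hz
  have hl0 : meromorphicOrderAt F l = ⊤ := by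
    by_contra hne
    exact MeromorphicOn.meromorphicOrderAt_ne_top_of_isPreconnected (U := Set.univ) (f := F) 
      (fun z _ => hF z) isPreconnected_univ (Set.mem_univ l) (Set.mem_univ 0) hne h0
  rw [meromorphicOrderAt_eq_top_iff] at hl0
  have ht : Tendsto (fun y => y + l) (𝓝[≠] 0) (𝓝[≠] l) := by
    refine tendsto_nhdsWithin_of_tendsto_nhds_of_eventually_within _ ?_ ?_
    · exact ((continuous_id.add continuous_const).tendsto' 0 _ (by simp)).mono_left nhdsWithin_le_nhds
    · filter_upwards [self_mem_nhdsWithin] with y hy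
      simpa using hy
  have hcob : Tendsto L.weierstrassP (𝓝[≠] 0) (Bornology.cobounded ℂ) := by
    apply tendsto_cobounded_of_meromorphicOrderAt_neg
    rw [L.order_weierstrassP 0 (zero_mem _)]
    decide
  have hQ0 : ∀ᶠ z in 𝓝[≠] 0, Q.eval (L.weierstrassP z) ≠ 0 := by
    have hfin : {x : ℂ | Q.eval x = 0}.Finite := by
      refine (Q.roots.toFinset.finite_toSet).subset ?_
      intro x hx
      simpa [hQ] using hx
    exact hcob.eventually (Bornology.isBounded_def.1 hfin.isBounded)
  have e : (v ∘ (· + l)) =ᶠ[𝓝[≠] 0] v := by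
    filter_upwards [h, ht.eventually hl0, hQ0] with z h1 h2 h3
    simp only [F, L.weierstrassP_add_coe z ⟨l, hl⟩, h1] at h2
    have h4 : (L'.weierstrassP (β * z) - v (z + l)) * Q.eval (L.weierstrassP z) = 0 := by
      linear_combination h2
    exact (sub_eq_zero.1 ((mul_eq_zero.1 h4).resolve_right h3)).symm
  have h5 := meromorphicOrderAt_congr e
  rw [meromorphicOrderAt_comp_add_const_eq_meromorphicOrderAt, zero_add, hvo, hvo, mul_zero, 
    L'.order_weierstrassP 0 (zero_mem _)] at h5
  have h6 := (wp_anal L' hcon).meromorphicOrderAt_nonneg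
  rw [h5] at h6
  exact absurd h6 (by decide)

end HelpersC

section HelpersB
open Filter Topology PowerSeries

/-- Taylor series at 0. -/
noncomputable def tay (f : ℂ → ℂ) : ℂ⟦X⟧ := PowerSeries.mk fun n => iteratedDeriv n f 0 / n.factorial

theorem tay_congr {f g : ℂ → ℂ} (h : f =ᶠ[𝓝 0] g) : tay f = tay g := by
  ext n; simp [tay, h.iteratedDeriv_eq n]

theorem tay_add {f g : ℂ → ℂ} (hf : AnalyticAt ℂ f 0) (hg : AnalyticAt ℂ g 0) :
    tay (fun z => f z + g z) = tay f + tay g := by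
  ext n; simp [tay, iteratedDeriv_fun_add hf.contDiffAt hg.contDiffAt, add_div]

theorem tay_mul {f g : ℂ → ℂ} (hf : AnalyticAt ℂ f 0) (hg : AnalyticAt ℂ g 0) :
    tay (fun z => f z * g z) = tay f * tay g := by
  ext n
  simp only [tay, coeff_mk, coeff_mul]
  rw [iteratedDeriv_fun_mul hf.contDiffAt hg.contDiffAt,
    ← Finset.Nat.sum_antidiagonal_eq_sum_range_succ (fun i j => (n.choose i : ℂ) * iteratedDeriv i f 0 * iteratedDeriv j g 0),
    Finset.sum_div]
  refine Finset.sum_congr rfl fun p hp => ?_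
  obtain rfl := Finset.HasAntidiagonal.mem_antidiagonal.1 hp
  have h := Nat.add_choose_mul_factorial_mul_factorial p.1 p.2
  have h' : ((p.1 + p.2).choose p.1 : ℂ) * p.1.factorial * p.2.factorial = (p.1 + p.2).factorial := by
    rw [← Nat.choose_symm_add] at h; exact_mod_cast h
  have h1 : (p.1.factorial : ℂ) ≠ 0 := by exact_mod_cast p.1.factorial_ne_zero
  have h2 : (p.2.factorial : ℂ) ≠ 0 := by exact_mod_cast p.2.factorial_ne_zero
  have h3 : ((p.1 + p.2).factorial : ℂ) ≠ 0 := by exact_mod_cast (p.1 + p.2).factorial_ne_zero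
  field_simp
  rw [← h']; ring

theorem tay_const (c : ℂ) : tay (fun _ => c) = C c := by
  ext n
  simp only [tay, coeff_mk, iteratedDeriv_const, coeff_C]
  split_ifs with h <;> simp [h]

theorem tay_id : tay (fun z => z) = X := by
  ext n
  simp only [tay, coeff_mk, coeff_X, iteratedDeriv_fun_id_zero]
  split_ifs with h <;> simp [h]

theorem tay_pow {f : ℂ → ℂ} (hf : AnalyticAt ℂ f 0) (n : ℕ) :
    tay (fun z => f z ^ n) = tay f ^ n := by
  induction n with
  | zero => simp [tay_const]
  | succ n ih => simp only [pow_succ]; rw [tay_mul (f := fun z => f z ^ n) (hf.pow n) hf, ih]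

theorem tay_sum {ι : Type*} (s : Finset ι) {f : ι → ℂ → ℂ} (hf : ∀ i, AnalyticAt ℂ (f i) 0) :
    tay (fun z => ∑ i ∈ s, f i z) = ∑ i ∈ s, tay (f i) := by
  classical
  induction s using Finset.induction_on with
  | empty => simp [tay_const]
  | insert a s ha ih =>
    simp only [Finset.sum_insert ha]
    rw [tay_add (hf a) (Finset.analyticAt_fun_sum _ fun i _ => hf i), ih]

theorem tay_rescale (f : ℂ → ℂ) (c : ℂ) : tay (fun z => f (c * z)) = rescale c (tay f) := by
  have : ∀ n, iteratedDeriv n (fun z => f (c * z)) = fun z => c ^ n * iteratedDeriv n f (c * z) := by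
    intro n
    induction n with
    | zero => simp
    | succ n ih =>
      rw [iteratedDeriv_succ, ih]
      ext z
      rw [deriv_const_mul_field, deriv_comp_mul_left (f := iteratedDeriv n f), iteratedDeriv_succ, smul_eq_mul]; ring
  ext n
  simp [tay, this, mul_div_assoc]

theorem tay_deriv (f : ℂ → ℂ) : tay (deriv f) = derivative ℂ (tay f) := by
  ext n
  simp only [tay, coeff_mk, coeff_derivative, ← iteratedDeriv_succ']
  rw [Nat.factorial_succ]
  push_cast
  have h1 : (n.factorial : ℂ) ≠ 0 := by exact_mod_cast n.factorial_ne_zero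
  have h2 : (n + 1 : ℂ) ≠ 0 := by exact_mod_cast n.succ_ne_zero
  field_simp

theorem eq_of_tay {f g : ℂ → ℂ} (hf : AnalyticAt ℂ f 0) (hg : AnalyticAt ℂ g 0) (h : tay f = tay g) :
    f =ᶠ[𝓝 0] g := by
  have h1 : analyticOrderAt (f - g) 0 = ⊤ := by
    rw [ENat.eq_top_iff_forall_ge]
    intro m
    rw [natCast_le_analyticOrderAt_iff_iteratedDeriv_eq_zero (hf.sub hg)]
    intro i hi
    rw [iteratedDeriv_sub hf.contDiffAt hg.contDiffAt]
    have := congrArg (coeff i) h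
    have h1 : (i.factorial : ℂ) ≠ 0 := by exact_mod_cast i.factorial_ne_zero
    simp only [tay, coeff_mk] at this
    field_simp at this
    rw [this, sub_self]
  rw [analyticOrderAt_eq_top] at h1
  filter_upwards [h1] with z hz
  exact sub_eq_zero.1 hz

/-- The formal differential equation. -/
def FODE (a b : ℂ) (A : ℂ⟦X⟧) : Prop :=
  (X ^ 3 * derivative ℂ A - C 2) ^ 2 =
    C 4 * (1 + X ^ 2 * A) ^ 3 - C a * X ^ 4 * (1 + X ^ 2 * A) - C b * X ^ 6

theorem FODE.unique {a b : ℂ} {A B : ℂ⟦X⟧} (hA : FODE a b A) (hB : FODE a b B) : A = B := by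
  by_contra hne
  set D := A - B with hD
  have hD0 : D ≠ 0 := sub_ne_zero.2 hne
  have e1 : X ^ 2 * (C 4 * (X * derivative ℂ D) + C 12 * D) = 
      X ^ 2 * (X ^ 4 * (derivative ℂ D * (derivative ℂ A + derivative ℂ B)) + 
       X ^ 2 * (D * (C a * X ^ 2 - C 12 * (A + B) - C 4 * X ^ 2 * (A ^ 2 + A * B + B ^ 2)))) := by
    simp only [FODE] at hA hB
    have h4 : (C 4 : ℂ⟦X⟧) = 4 := map_ofNat C 4
    have h2 : (C 2 : ℂ⟦X⟧) = 2 := map_ofNat C 2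
    have h12 : (C 12 : ℂ⟦X⟧) = 12 := map_ofNat C 12
    rw [h4, h2] at hA hB
    rw [h4, h12, hD, map_sub]
    linear_combination hB - hA
  have e2 := mul_left_cancel₀ (pow_ne_zero 2 X_ne_zero) e1
  have hz : ∀ n, coeff n D = 0 := by
    intro n
    induction n using Nat.strong_induction_on with
    | _ n ih =>
      have hd : (X : ℂ⟦X⟧) ^ n ∣ D := X_pow_dvd_iff.2 ih
      have hd' : (X : ℂ⟦X⟧) ^ n ∣ X * derivative ℂ D := by
        rw [X_pow_dvd_iff]
        intro m hm
        cases m with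
        | zero => simp
        | succ m => rw [mul_comm, coeff_succ_mul_X, coeff_derivative, ih _ hm, zero_mul]
      have h3 : (X : ℂ⟦X⟧) ^ (n+1) ∣ (X ^ 4 * (derivative ℂ D * (derivative ℂ A + derivative ℂ B)) + 
       X ^ 2 * (D * (C a * X ^ 2 - C 12 * (A + B) - C 4 * X ^ 2 * (A ^ 2 + A * B + B ^ 2)))) := by
        obtain ⟨P, hP⟩ := hd
        obtain ⟨Q, hQ⟩ := hd'
        refine dvd_add ⟨X ^ 2 * Q * (derivative ℂ A + derivative ℂ B), ?_⟩
          ⟨X * P * (C a * X ^ 2 - C 12 * (A + B) - C 4 * X ^ 2 * (A ^ 2 + A * B + B ^ 2)), ?_⟩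
        · linear_combination X ^ 3 * (derivative ℂ A + derivative ℂ B) * hQ
        · linear_combination X ^ 2 * (C a * X ^ 2 - C 12 * (A + B) - C 4 * X ^ 2 * (A ^ 2 + A * B + B ^ 2)) * hP
      rw [← e2] at h3
      have h4 := X_pow_dvd_iff.1 h3 n (Nat.lt_succ_self n)
      have h5 : coeff n (X * derivative ℂ D) = n * coeff n D := by
        cases n with
        | zero => simp
        | succ m => rw [mul_comm, coeff_succ_mul_X, coeff_derivative]; push_cast; ring
      rw [map_add, coeff_C_mul, coeff_C_mul, h5] at h4
      have h6 : (4 * n + 12 : ℂ) * coeff n D = 0 := by linear_combination h4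
      refine (mul_eq_zero.1 h6).resolve_left ?_
      exact_mod_cast (by omega : 4 * n + 12 ≠ 0)
  exact hD0 (PowerSeries.ext hz)

theorem FODE.map {a b : ℂ} {A : ℂ⟦X⟧} (hA : FODE a b A) (σ : ℂ →+* ℂ) (ha : σ a = a) (hb : σ b = b) :
    FODE a b (PowerSeries.map σ A) := by
  have h := congrArg (PowerSeries.map σ) hA
  have hd : PowerSeries.map σ (derivative ℂ A) = derivative ℂ (PowerSeries.map σ A) := by
    ext n; simp [coeff_derivative]
  have h2 : σ 2 = 2 := map_ofNat σ 2
  have h4 : σ 4 = 4 := map_ofNat σ 4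
  simpa [FODE, hd, ha, hb, h2, h4] using h

theorem map_rescale' (σ : ℂ →+* ℂ) (c : ℂ) (A : ℂ⟦X⟧) :
    PowerSeries.map σ (rescale c A) = rescale (σ c) (PowerSeries.map σ A) := by
  ext n; simp [coeff_rescale]

/-- `f` is analytic at 0 with Taylor series `A`. -/
def HT (f : ℂ → ℂ) (A : ℂ⟦X⟧) : Prop := AnalyticAt ℂ f 0 ∧ tay f = A

theorem HT.add {f g : ℂ → ℂ} {A B : ℂ⟦X⟧} (hf : HT f A) (hg : HT g B) : HT (fun z => f z + g z) (A + B) :=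
  ⟨hf.1.add hg.1, by rw [tay_add hf.1 hg.1, hf.2, hg.2]⟩

theorem HT.mul {f g : ℂ → ℂ} {A B : ℂ⟦X⟧} (hf : HT f A) (hg : HT g B) : HT (fun z => f z * g z) (A * B) :=
  ⟨hf.1.mul hg.1, by rw [tay_mul hf.1 hg.1, hf.2, hg.2]⟩

theorem HT.pow {f : ℂ → ℂ} {A : ℂ⟦X⟧} (hf : HT f A) (n : ℕ) : HT (fun z => f z ^ n) (A ^ n) :=
  ⟨hf.1.pow n, by rw [tay_pow hf.1, hf.2]⟩

theorem HT.const (c : ℂ) : HT (fun _ => c) (C c) := ⟨analyticAt_const, tay_const c⟩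

theorem HT.id : HT (fun z => z) X := ⟨analyticAt_id, tay_id⟩

theorem HT.one : HT (fun _ => 1) 1 := by simpa using HT.const 1


theorem except_zero_near (L : PeriodPair) : ∀ᶠ z in 𝓝 (0:ℂ), z = 0 ∨ z ∉ L.lattice := by
  have h := (L.isOpen_compl_lattice_sdiff (s := {0})).mem_nhds (x := 0) (by simp)
  filter_upwards [h] with z hz
  by_contra hcon
  push Not at hcon
  exact hz ⟨hcon.2, hcon.1⟩

theorem fode_wp (L : PeriodPair) : FODE L.g₂ L.g₃ (tay (L.weierstrassPExcept 0)) := by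
  have hA := L.analyticAt_weierstrassPExcept 0
  have hB := hA.deriv
  have key : (fun z => (z ^ 3 * deriv (L.weierstrassPExcept 0) z + (-2)) ^ 2) =ᶠ[𝓝 0]
      fun z => 4 * (1 + z ^ 2 * L.weierstrassPExcept 0 z) ^ 3 +
        (-L.g₂ * z ^ 4 * (1 + z ^ 2 * L.weierstrassPExcept 0 z) + (-L.g₃) * z ^ 6) := by
    filter_upwards [except_zero_near L] with z hz
    rcases eq_or_ne z 0 with rfl | h0
    · norm_num
    have hz := hz.resolve_left h0
    rw [L.eqOn_deriv_weierstrassPExcept_derivWeierstrassPExcept 0 (x := z) (by simp [hz]), ← wp_except L z h0]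
    have h1 := L.derivWeierstrassPExcept_def 0 z
    simp only [ZeroMemClass.coe_zero, sub_zero] at h1
    have h2 : z ^ 3 * L.derivWeierstrassPExcept 0 z + (-2) = z ^ 3 * L.derivWeierstrassP z := by
      rw [h1]; field_simp; ring
    rw [h2]
    linear_combination z ^ 6 * L.derivWeierstrassP_sq z hz
  have hAT : HT (L.weierstrassPExcept 0) (tay (L.weierstrassPExcept 0)) := ⟨hA, rfl⟩
  have hBT : HT (deriv (L.weierstrassPExcept 0)) (derivative ℂ (tay (L.weierstrassPExcept 0))) :=
    ⟨hB, tay_deriv _⟩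
  have hU := HT.one.add ((HT.id.pow 2).mul hAT)
  have h1 := (((HT.id.pow 3).mul hBT).add (HT.const (-2))).pow 2
  have h2 := ((HT.const 4).mul (hU.pow 3)).add
    ((((HT.const (-L.g₂)).mul (HT.id.pow 4)).mul hU).add ((HT.const (-L.g₃)).mul (HT.id.pow 6)))
  have := (h1.2.symm.trans (tay_congr key)).trans h2.2
  rw [FODE]
  simp only [map_neg] at this
  linear_combination this

/-- Homogenised polynomial as a power series. -/
noncomputable def homP (N : ℕ) (A : ℂ⟦X⟧) (P : Polynomial ℂ) : ℂ⟦X⟧ :=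
  ∑ i ∈ Finset.range (N + 1), C (P.coeff i) * (1 + X ^ 2 * A) ^ i * (X ^ 2) ^ (N - i)

theorem homP_map (σ : ℂ →+* ℂ) (N : ℕ) (A : ℂ⟦X⟧) (P : Polynomial ℂ) :
    PowerSeries.map σ (homP N A P) = homP N (PowerSeries.map σ A) (P.map σ) := by
  simp [homP, map_sum]

/-- Homogenised polynomial as a function. -/
noncomputable def homF (N : ℕ) (w : ℂ → ℂ) (P : Polynomial ℂ) (z : ℂ) : ℂ :=
  ∑ i ∈ Finset.range (N + 1), P.coeff i * (1 + z ^ 2 * w z) ^ i * (z ^ 2) ^ (N - i)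

theorem homF_anal (N : ℕ) (w : ℂ → ℂ) (hw : AnalyticAt ℂ w 0) (P : Polynomial ℂ) :
    AnalyticAt ℂ (homF N w P) 0 := by
  unfold homF; fun_prop

theorem tay_homF (N : ℕ) (w : ℂ → ℂ) (hw : AnalyticAt ℂ w 0) (P : Polynomial ℂ) :
    tay (homF N w P) = homP N (tay w) P := by
  unfold homF homP
  rw [tay_sum _ (fun i => by fun_prop)]
  refine Finset.sum_congr rfl fun i _ => ?_
  have hU := HT.one.add ((HT.id.pow 2).mul (⟨hw, rfl⟩ : HT w (tay w)))
  exact (((HT.const (P.coeff i)).mul (hU.pow i)).mul ((HT.id.pow 2).pow (N - i))).2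

theorem homF_eq (L : PeriodPair) (N : ℕ) (P : Polynomial ℂ) (hN : P.natDegree ≤ N) (z : ℂ) (hz : z ≠ 0) :
    homF N (L.weierstrassPExcept 0) P z = (z ^ 2) ^ N * P.eval (L.weierstrassP z) := by
  rw [homF, Polynomial.eval_eq_sum_range' (Nat.lt_succ_of_le hN), Finset.mul_sum]
  refine Finset.sum_congr rfl fun i hi => ?_
  have hi : i ≤ N := Nat.lt_succ_iff.1 (Finset.mem_range.1 hi)
  rw [← wp_except L z hz, mul_pow]
  have : (z ^ 2) ^ N = (z ^ 2) ^ i * (z ^ 2) ^ (N - i) := by rw [← pow_add, Nat.add_sub_cancel' hi]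
  rw [this]; ring

theorem rel_iff (L L' : PeriodPair) (α : ℂ) (hα : α ≠ 0) (N : ℕ) (P Q : Polynomial ℂ)
    (hP : P.natDegree ≤ N) (hQ : Q.natDegree ≤ N) :
    (∀ᶠ z in 𝓝[≠] 0,
      P.eval (L.weierstrassP z) = L'.weierstrassP (α * z) * Q.eval (L.weierstrassP z)) ↔
    C α ^ 2 * X ^ 2 * homP N (tay (L.weierstrassPExcept 0)) P =
      (1 + C α ^ 2 * X ^ 2 * rescale α (tay (L'.weierstrassPExcept 0))) *
        homP N (tay (L.weierstrassPExcept 0)) Q := by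
  have hw := L.analyticAt_weierstrassPExcept 0
  have hw' : AnalyticAt ℂ (fun z => L'.weierstrassPExcept 0 (α * z)) 0 := by
    have : AnalyticAt ℂ (L'.weierstrassPExcept 0) (α * 0) := by
      simpa using L'.analyticAt_weierstrassPExcept 0
    exact this.fun_comp (f := fun z => α * z) (by fun_prop)
  have hp := homF_anal N _ hw P
  have hq := homF_anal N _ hw Q
  let f : ℂ → ℂ := fun z => α ^ 2 * z ^ 2 * homF N (L.weierstrassPExcept 0) P z
  let g : ℂ → ℂ := fun z => (1 + α ^ 2 * z ^ 2 * L'.weierstrassPExcept 0 (α * z)) *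
    homF N (L.weierstrassPExcept 0) Q z
  have hf : AnalyticAt ℂ f 0 := by fun_prop
  have hg : AnalyticAt ℂ g 0 := by fun_prop
  have tf : tay f = C α ^ 2 * X ^ 2 * homP N (tay (L.weierstrassPExcept 0)) P := by
    rw [← map_pow]
    exact (((HT.const (α ^ 2)).mul (HT.id.pow 2)).mul ⟨hp, tay_homF N _ hw P⟩).2
  have tg : tay g = (1 + C α ^ 2 * X ^ 2 * rescale α (tay (L'.weierstrassPExcept 0))) *
        homP N (tay (L.weierstrassPExcept 0)) Q := by
    rw [← map_pow]
    exact ((HT.one.add (((HT.const (α ^ 2)).mul (HT.id.pow 2)).mul ⟨hw', tay_rescale _ α⟩)).mul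
      ⟨hq, tay_homF N _ hw Q⟩).2
  rw [← tf, ← tg]
  have e1 : (∀ᶠ z in 𝓝[≠] 0,
      P.eval (L.weierstrassP z) = L'.weierstrassP (α * z) * Q.eval (L.weierstrassP z)) ↔
      f =ᶠ[𝓝[≠] 0] g := by
    refine eventually_congr ?_
    filter_upwards [self_mem_nhdsWithin] with z hz
    have hz : z ≠ 0 := hz
    simp only [f, g]
    rw [homF_eq L N P hP z hz, homF_eq L N Q hQ z hz, ← mul_pow, ← wp_except L' _ (mul_ne_zero hα hz)]
    have hne : (α * z) ^ 2 * (z ^ 2) ^ N ≠ 0 := by positivity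
    constructor
    · intro h; rw [h]; ring
    · intro h
      apply mul_left_cancel₀ hne
      linear_combination h
  rw [e1, ContinuousAt.eventuallyEq_nhds_iff_eventuallyEq_nhdsNE hf.continuousAt hg.continuousAt]
  exact ⟨tay_congr, eq_of_tay hf hg⟩

theorem tay_fix (L : PeriodPair) (σ : ℂ →+* ℂ) (h2 : σ L.g₂ = L.g₂) (h3 : σ L.g₃ = L.g₃) :
    PowerSeries.map σ (tay (L.weierstrassPExcept 0)) = tay (L.weierstrassPExcept 0) :=
  ((fode_wp L).map σ h2 h3).unique (fode_wp L)

theorem rel_map (L L' : PeriodPair) (σ : ℂ →+* ℂ) (h2 : σ L.g₂ = L.g₂) (h3 : σ L.g₃ = L.g₃)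
    (h2' : σ L'.g₂ = L'.g₂) (h3' : σ L'.g₃ = L'.g₃) (α : ℂ) (hα : α ≠ 0) (P Q : Polynomial ℂ)
    (h : ∀ᶠ z in 𝓝[≠] 0,
      P.eval (L.weierstrassP z) = L'.weierstrassP (α * z) * Q.eval (L.weierstrassP z)) :
    ∀ᶠ z in 𝓝[≠] 0, (P.map σ).eval (L.weierstrassP z) =
      L'.weierstrassP (σ α * z) * (Q.map σ).eval (L.weierstrassP z) := by
  have h1 := (rel_iff L L' α hα (max P.natDegree Q.natDegree) P Q (le_max_left _ _) (le_max_right _ _)).1 h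
  refine (rel_iff L L' (σ α) (by simpa using hα) (max P.natDegree Q.natDegree) _ _
    (by rw [Polynomial.natDegree_map]; exact le_max_left _ _)
    (by rw [Polynomial.natDegree_map]; exact le_max_right _ _)).2 ?_
  have h4 := congrArg (PowerSeries.map σ) h1
  simpa only [map_mul, map_add, map_pow, map_one, PowerSeries.map_C, PowerSeries.map_X, homP_map, map_rescale',
    tay_fix L σ h2 h3, tay_fix L' σ h2' h3'] using h4

theorem scalar (L L' : PeriodPair) (h2 : IsAlgebraic ℚ L.g₂) (h3 : IsAlgebraic ℚ L.g₃)
    (h2' : IsAlgebraic ℚ L'.g₂) (h3' : IsAlgebraic ℚ L'.g₃) (α : ℂ)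
    (hL : ∀ l ∈ L.lattice, α * l ∈ L'.lattice) : IsAlgebraic ℚ α := by
  by_contra hα
  have hα0 : α ≠ 0 := by rintro rfl; exact hα isAlgebraic_zero
  obtain ⟨P, Q, hQ, hrel⟩ := exists_rel L L' α hα0 hL
  have hdiv : ∀ m : ℕ, (α / (m + 1)) * L.ω₁ ∈ L'.lattice := by
    intro m
    have hm : ((m : ℂ) + 1) ≠ 0 := by exact_mod_cast m.succ_ne_zero
    have hβ : ¬ IsAlgebraic ℚ (α / (m + 1)) := by
      intro hb
      apply hα
      have hm' : IsAlgebraic ℚ ((m : ℂ) + 1) := by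
        have := isAlgebraic_natCast (R := ℚ) (A := ℂ) (m + 1)
        push_cast at this; exact this
      have := hb.mul hm'
      rwa [div_mul_cancel₀ _ hm] at this
    obtain ⟨σ, hσ, hσα⟩ := exists_aut α _ hα hβ
    have h5 := rel_map L L' (σ : ℂ →+* ℂ) (hσ _ h2) (hσ _ h3) (hσ _ h2') (hσ _ h3') α hα0 P Q hrel
    have hσα' : (σ : ℂ →+* ℂ) α = α / (m + 1) := hσα
    rw [hσα'] at h5
    exact mem_of_rel L L' _ (div_ne_zero hα0 hm) _ _
      ((Polynomial.map_ne_zero_iff (σ : ℂ →+* ℂ).injective).2 hQ) h5 _ L.ω₁_mem_lattice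
  have hω : L.ω₁ ≠ 0 := L.indep.ne_zero 0
  have hlim : Tendsto (fun m : ℕ => (α / ((m : ℂ) + 1)) * L.ω₁) atTop (𝓝 0) := by
    have h1 := (tendsto_one_div_add_atTop_nhds_zero_nat (𝕜 := ℂ)).const_mul (α * L.ω₁)
    rw [mul_zero] at h1
    refine h1.congr fun m => ?_
    ring
  obtain ⟨m, hm⟩ := (hlim.eventually (except_zero_near L')).exists
  rcases hm with hm | hm
  · have hm1 : ((m : ℂ) + 1) ≠ 0 := by exact_mod_cast m.succ_ne_zero
    exact mul_ne_zero (div_ne_zero hα0 hm1) hω hm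
  · exact hm (hdiv m)

theorem exists_pair (Λ : AddSubgroup ℂ) (hd : DiscreteTopology Λ)
    (hs : Submodule.span ℝ (Λ : Set ℂ) = ⊤) :
    ∃ L : PeriodPair, ∀ x, x ∈ L.lattice ↔ x ∈ Λ := by
  let S : Submodule ℤ ℂ := AddSubgroup.toIntSubmodule Λ
  haveI : DiscreteTopology S := hd
  haveI : IsZLattice ℝ S := ⟨hs⟩
  have hrk : Module.finrank ℤ S = 2 := by
    rw [ZLattice.rank ℝ S]; exact Complex.finrank_real_complex
  haveI : Module.Free ℤ S := ZLattice.module_free ℝ S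
  haveI : Module.Finite ℤ S := ZLattice.module_finite ℝ S
  let b : Module.Basis (Fin 2) ℤ S := Module.finBasisOfFinrankEq ℤ S hrk
  let B := b.ofZLatticeBasis ℝ S
  have hli := B.linearIndependent
  refine ⟨⟨B 0, B 1, ?_⟩, ?_⟩
  · have hB : ![B 0, B 1] = B := by ext i; fin_cases i <;> rfl
    rw [hB]; exact hli
  · intro x
    have h1 := b.ofZLatticeBasis_span ℝ S
    have h2 : x ∈ Λ ↔ x ∈ S := Iff.rfl
    rw [h2, ← h1, PeriodPair.lattice]
    have : Set.range B = {B 0, B 1} := by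
      ext y; simp [Fin.exists_fin_two, eq_comm]
    show _ ↔ x ∈ Submodule.span ℤ (Set.range B)
    rw [this]

theorem G_eq (Λ : AddSubgroup ℂ) (L : PeriodPair) (h : ∀ x, x ∈ L.lattice ↔ x ∈ Λ) (n : ℕ) (hn : n ≠ 0) :
    ∑' w : {w : ℂ // w ∈ Λ ∧ w ≠ 0}, ((w : ℂ) ^ n)⁻¹ = L.G n := by
  let ι : {w : ℂ // w ∈ Λ ∧ w ≠ 0} → L.lattice := fun w => ⟨w.1, (h _).2 w.2.1⟩
  have hι : Function.Injective ι := fun a b hab => Subtype.ext (congrArg (fun x : L.lattice => (x : ℂ)) hab)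
  rw [PeriodPair.G, ← hι.tsum_eq (f := fun l : L.lattice => ((l : ℂ) ^ n)⁻¹)]
  intro l hl
  refine ⟨⟨l, (h _).1 l.2, ?_⟩, rfl⟩
  rintro h0
  apply hl
  simp [h0, hn]


end HelpersB

/-- Let `Λ₁, …, Λ_g` and `Λ'₁, …, Λ'_{g'}` be CM lattices (CM by
`R = τ(𝓞 K)`) with algebraic Eisenstein series.  If a complex `g' × g` matrix `M` maps
`Λ₁ ⊕ ⋯ ⊕ Λ_g` into `Λ'₁ ⊕ ⋯ ⊕ Λ'_{g'}`, then every entry of `M` is algebraic over `ℚ`. -/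
theorem stmt_10
    (K : Type*) [Field K] [NumberField K]
    (hdeg : Module.finrank ℚ K = 2)
    (hcplx : IsEmpty (K →+* ℝ))
    (τ : K →+* ℂ)
    (g g' : ℕ)
    (Λ : Fin g → AddSubgroup ℂ) (Λ' : Fin g' → AddSubgroup ℂ)
    (hdisc : ∀ i, DiscreteTopology (Λ i)) (hdisc' : ∀ j, DiscreteTopology (Λ' j))
    (hspan : ∀ i, Submodule.span ℝ (Λ i : Set ℂ) = ⊤)
    (hspan' : ∀ j, Submodule.span ℝ (Λ' j : Set ℂ) = ⊤)
    (hCM : ∀ i, {z : ℂ | ∀ w ∈ Λ i, z * w ∈ Λ i} =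
      Set.range fun a : 𝓞 K => τ (algebraMap (𝓞 K) K a))
    (hCM' : ∀ j, {z : ℂ | ∀ w ∈ Λ' j, z * w ∈ Λ' j} =
      Set.range fun a : 𝓞 K => τ (algebraMap (𝓞 K) K a))
    (halg : ∀ i, IsAlgebraic ℚ (g₂ (Λ i)) ∧ IsAlgebraic ℚ (g₃ (Λ i)))
    (halg' : ∀ j, IsAlgebraic ℚ (g₂ (Λ' j)) ∧ IsAlgebraic ℚ (g₃ (Λ' j)))
    (M : Matrix (Fin g') (Fin g) ℂ)
    (hmap : ∀ γ : Fin g → ℂ, (∀ i, γ i ∈ Λ i) → ∀ j, M.mulVec γ j ∈ Λ' j) :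
    ∀ j i, IsAlgebraic ℚ (M j i) := by
  intro j i
  obtain ⟨L, hL⟩ := exists_pair (Λ i) (hdisc i) (hspan i)
  obtain ⟨L', hL'⟩ := exists_pair (Λ' j) (hdisc' j) (hspan' j)
  have e2 : g₂ (Λ i) = L.g₂ := by rw [g₂, PeriodPair.g₂, G_eq (Λ i) L hL 4 (by norm_num)]
  have e3 : g₃ (Λ i) = L.g₃ := by rw [g₃, PeriodPair.g₃, G_eq (Λ i) L hL 6 (by norm_num)]
  have e2' : g₂ (Λ' j) = L'.g₂ := by rw [g₂, PeriodPair.g₂, G_eq (Λ' j) L' hL' 4 (by norm_num)]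
  have e3' : g₃ (Λ' j) = L'.g₃ := by rw [g₃, PeriodPair.g₃, G_eq (Λ' j) L' hL' 6 (by norm_num)]
  refine scalar L L' (e2 ▸ (halg i).1) (e3 ▸ (halg i).2) (e2' ▸ (halg' j).1) (e3' ▸ (halg' j).2) _ ?_
  intro l hl
  rw [hL'] 
  have := hmap (Pi.single i l) (fun k => by
    rcases eq_or_ne k i with rfl | hk
    · rw [Pi.single_eq_same]; exact (hL _).1 hl
    · rw [Pi.single_eq_of_ne hk]; exact zero_mem _) j
  rw [Matrix.mulVec_single] at this
  exact this
end

section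
/- Let σ be the nontrivial automorphism of K over ℚ (complex conjugation), acting coordinatewise on K^g and mapping 𝓞_K-submodules to 𝓞_K-submodules. Let L be a finitely generated 𝓞_K-submodule of K^g whose K-span is all of K^g. If σ(L) is isomorphic to L as an 𝓞_K-module, then L ⊕ L is a free 𝓞_K-module (equivalently, the Steinitz class of L has order at most 2 in the class group). -/
open NumberField

theorem aux_prod {O : Type*} [CommRing O] [IsDomain O] (I J : Ideal O) (a b c d n : O)
    (ha : a ∈ I) (hb : b ∈ I) (hc : c ∈ J) (hd : d ∈ J) (hn : a * c + b * d = n) (hn0 : n ≠ 0)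
    (hdvd : ∀ i ∈ I, ∀ j ∈ J, n ∣ i * j) : Nonempty ((O × O) ≃ₗ[O] (I × J)) := by
  let F : (O × O) →ₗ[O] (I × J) :=
    { toFun := fun p => (⟨p.1 * a + p.2 * b, I.add_mem (I.mul_mem_left _ ha) (I.mul_mem_left _ hb)⟩,
        ⟨p.2 * c - p.1 * d, J.sub_mem (J.mul_mem_left _ hc) (J.mul_mem_left _ hd)⟩)
      map_add' := by
        intro x y
        ext <;> simp <;> ring
      map_smul' := by
        intro r x
        ext <;> simp <;> ring }
  refine ⟨LinearEquiv.ofBijective F ⟨?_, ?_⟩⟩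
  · rw [injective_iff_map_eq_zero]
    rintro ⟨x, y⟩ h
    have h1 : x * a + y * b = 0 := congrArg (fun p => (p.1 : O)) h
    have h2 : y * c - x * d = 0 := congrArg (fun p => (p.2 : O)) h
    have hx : n * x = 0 := by rw [← hn]; linear_combination c * h1 - b * h2
    have hy : n * y = 0 := by rw [← hn]; linear_combination d * h1 + a * h2
    ext
    · simpa [hn0] using hx
    · simpa [hn0] using hy
  · rintro ⟨⟨i, hi⟩, ⟨j, hj⟩⟩
    obtain ⟨x, hx⟩ : n ∣ i * c - b * j := dvd_sub (hdvd _ hi _ hc) (hdvd _ hb _ hj)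
    obtain ⟨y, hy⟩ : n ∣ i * d + a * j := dvd_add (hdvd _ hi _ hd) (hdvd _ ha _ hj)
    refine ⟨(x, y), ?_⟩
    ext
    · change x * a + y * b = i
      apply mul_left_cancel₀ hn0
      linear_combination (-a) * hx - b * hy + i * hn
    · change y * c - x * d = j
      apply mul_left_cancel₀ hn0
      linear_combination d * hx - c * hy + j * hn

theorem aux_decomp {O : Type*} [CommRing O] (hproj : ∀ I : Ideal O, Module.Projective O I)
    (g : ℕ) : ∀ {M : Type*} [AddCommGroup M] [Module O M] (f : M →ₗ[O] (Fin g → O))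
    (_ : Function.Injective f),
    ∃ (n : ℕ) (I : Fin n → Ideal O), Nonempty (M ≃ₗ[O] (∀ i, I i)) := by
  induction g with
  | zero =>
    intro M _ _ f hf
    have : Subsingleton M := hf.subsingleton
    exact ⟨0, fun _ => ⊥, ⟨LinearEquiv.ofBijective 0
      ⟨fun _ _ _ => Subsingleton.elim _ _, fun y => ⟨0, Subsingleton.elim _ _⟩⟩⟩⟩
  | succ g ih =>
    intro M _ _ f hf
    let p : M →ₗ[O] O := (LinearMap.proj 0).comp f
    let q : LinearMap.ker p →ₗ[O] (Fin g → O) :=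
      (LinearMap.pi fun i => (LinearMap.proj i.succ)).comp (f.comp (LinearMap.ker p).subtype)
    have hq : Function.Injective q := by
      rw [injective_iff_map_eq_zero]
      rintro ⟨x, hx⟩ h
      ext
      apply hf
      simp only [map_zero, ZeroMemClass.coe_zero]
      funext i
      refine Fin.cases hx (fun i => congrFun h i) i
    obtain ⟨n, I, ⟨e⟩⟩ := ih q hq
    have := hproj (LinearMap.range p)
    obtain ⟨s, hs⟩ := LinearMap.exists_rightInverse_of_surjective p.rangeRestrict
      (LinearMap.range_rangeRestrict p)
    have hs' : ∀ y, p (s y) = y := fun y => congrArg Subtype.val (LinearMap.congr_fun hs y)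
    let C : (LinearMap.range p × LinearMap.ker p) →ₗ[O] M :=
      s.coprod (LinearMap.ker p).subtype
    have hC : Function.Bijective C := by
      constructor
      · rw [injective_iff_map_eq_zero]
        rintro ⟨y, ⟨k, hk⟩⟩ h
        have h0 : s y + k = 0 := h
        have h1 : p (s y + k) = 0 := by rw [h0, map_zero]
        rw [map_add, hs', LinearMap.mem_ker.1 hk, add_zero] at h1
        have hy : y = 0 := Subtype.ext h1
        subst hy
        rw [map_zero, zero_add] at h0
        subst h0
        rfl
      · intro m
        refine ⟨(p.rangeRestrict m, ⟨m - s (p.rangeRestrict m), ?_⟩), ?_⟩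
        · rw [LinearMap.mem_ker, map_sub, hs']
          simp
        · simp [C]
    refine ⟨n + 1, Fin.cons (LinearMap.range p) I, ⟨?_⟩⟩
    have e1 := (LinearEquiv.ofBijective C hC).symm
    have e2 : (LinearMap.range p × LinearMap.ker p) ≃ₗ[O] (LinearMap.range p × (∀ i, I i)) :=
      (LinearEquiv.refl O (LinearMap.range p)).prodCongr e
    have e3 : (LinearMap.range p × (∀ i, I i)) ≃ₗ[O]
        (∀ i, (Fin.cons (LinearMap.range p) I : Fin (n+1) → Ideal O) i) :=
      Fin.consLinearEquiv O
        (fun i => ((Fin.cons (LinearMap.range p) I : Fin (n+1) → Ideal O) i))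
    exact e1.trans (e2.trans e3)

theorem aux_embed {K : Type*} [Field K] [NumberField K] (g : ℕ) (L : Submodule (𝓞 K) (Fin g → K))
    (hfg : L.FG) : ∃ f : L →ₗ[𝓞 K] (Fin g → 𝓞 K), Function.Injective f := by
  classical
  obtain ⟨S, hS⟩ := hfg
  obtain ⟨d, hd⟩ := IsLocalization.exist_integer_multiples_of_finset (nonZeroDivisors (𝓞 K))
    (S.biUnion fun w => Finset.univ.image fun i => w i)
  have hd0 : (d : 𝓞 K) ≠ 0 := nonZeroDivisors.ne_zero d.2
  let Φ : (Fin g → 𝓞 K) →ₗ[𝓞 K] (Fin g → K) :=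
    LinearMap.pi fun i => (Algebra.linearMap (𝓞 K) K).comp (LinearMap.proj i)
  have hΦ : Function.Injective Φ := by
    intro x y h
    funext i
    exact RingOfIntegers.coe_injective (congrFun h i)
  let D : L →ₗ[𝓞 K] (Fin g → K) := (d : 𝓞 K) • L.subtype
  have hD : ∀ w : L, D w ∈ LinearMap.range Φ := by
    have : L ≤ (LinearMap.range Φ).comap ((d : 𝓞 K) • LinearMap.id) := by
      rw [← hS, Submodule.span_le]
      intro w hw
      have : ∀ i, ∃ x : 𝓞 K, algebraMap (𝓞 K) K x = (d : 𝓞 K) • w i := fun i =>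
        hd (w i) (by
          simp only [Finset.mem_biUnion, Finset.mem_image, Finset.mem_univ, true_and]
          exact ⟨w, hw, i, rfl⟩)
      choose x hx using this
      exact ⟨x, funext hx⟩
    exact fun w => this w.2
  refine ⟨(LinearEquiv.ofInjective Φ hΦ).symm.toLinearMap.comp (D.codRestrict _ hD), ?_⟩
  refine (LinearEquiv.ofInjective Φ hΦ).symm.injective.comp ?_
  intro x y h
  have h' : (d : 𝓞 K) • (x : Fin g → K) = (d : 𝓞 K) • (y : Fin g → K) := congrArg Subtype.val h
  exact Subtype.ext (smul_right_injective _ hd0 h')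

theorem aux_sigma {K : Type*} [Field K] [NumberField K] (σ : K ≃ₐ[ℚ] K) (g n : ℕ)
    (L : Submodule (𝓞 K) (Fin g → K)) (I : Fin n → Ideal (𝓞 K)) (f : L ≃ₗ[𝓞 K] (∀ i, I i)) :
    Nonempty ((∀ i, (I i).comap (RingOfIntegers.mapRingEquiv σ.toRingEquiv).symm) ≃ₗ[𝓞 K]
      (Submodule.span (𝓞 K) {v : Fin g → K | ∃ w ∈ L, v = fun i => σ (w i)})) := by
  set τ := RingOfIntegers.mapRingEquiv σ.toRingEquiv with hτ
  have hτσ : ∀ x : 𝓞 K, ((τ x : 𝓞 K) : K) = σ x := fun x => rfl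
  let S := Submodule.span (𝓞 K) {v : Fin g → K | ∃ w ∈ L, v = fun i => σ (w i)}
  have hsm : ∀ (r : 𝓞 K) (x : K), σ ((τ.symm r) • x) = r • σ x := by
    intro r x
    rw [Algebra.smul_def, Algebra.smul_def, map_mul]
    congr 1
    exact (hτσ (τ.symm r)).symm.trans (by rw [τ.apply_symm_apply])
  have hS : ∀ v ∈ S, ∃ w ∈ L, v = fun i => σ (w i) := by
    intro v hv
    induction hv using Submodule.span_induction with
    | mem x h => exact h
    | zero => exact ⟨0, L.zero_mem, by funext i; simp⟩
    | add x y _ _ hx hy =>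
      obtain ⟨w, hw, rfl⟩ := hx
      obtain ⟨z, hz, rfl⟩ := hy
      exact ⟨w + z, L.add_mem hw hz, by funext i; simp⟩
    | smul r x _ hx =>
      obtain ⟨w, hw, rfl⟩ := hx
      refine ⟨τ.symm r • w, L.smul_mem _ hw, ?_⟩
      funext i
      exact (hsm r (w i)).symm
  let t : (∀ i, (I i).comap τ.symm) → (∀ i, I i) := fun v i => ⟨τ.symm (v i), (v i).2⟩
  have tadd : ∀ v w, t (v + w) = t v + t w := fun v w => by
    funext i; ext; simp [t]
  have tsm : ∀ (r : 𝓞 K) v, t (r • v) = τ.symm r • t v := fun r v => by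
    funext i; apply Subtype.ext; exact map_mul τ.symm r (v i)
  let G : (∀ i, (I i).comap τ.symm) →ₗ[𝓞 K] S :=
    { toFun := fun v => ⟨fun i => σ ((f.symm (t v) : Fin g → K) i),
        Submodule.subset_span ⟨_, (f.symm (t v)).2, rfl⟩⟩
      map_add' := fun v w => by
        apply Subtype.ext; funext i; simp [tadd]
      map_smul' := fun r v => by
        apply Subtype.ext; funext i
        simp only [tsm, map_smul]
        exact hsm r _ }
  refine ⟨LinearEquiv.ofBijective G ⟨?_, ?_⟩⟩
  · intro v w h
    have h1 : t v = t w := by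
      apply f.symm.injective
      apply Subtype.ext
      funext i
      exact σ.injective (congrFun (congrArg Subtype.val h) i)
    funext i
    apply Subtype.ext
    exact τ.symm.injective (congrArg Subtype.val (congrFun h1 i))
  · rintro ⟨v, hv⟩
    obtain ⟨w, hw, rfl⟩ := hS v hv
    refine ⟨fun i => ⟨τ (f ⟨w, hw⟩ i), by simp⟩, ?_⟩
    have : t (fun i => ⟨τ (f ⟨w, hw⟩ i), by simp⟩) = f ⟨w, hw⟩ := by
      funext i; apply Subtype.ext; simp [t]
    apply Subtype.ext
    simp only [G, LinearMap.coe_mk, AddHom.coe_mk, this, LinearEquiv.symm_apply_apply]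

theorem aux_quad {K : Type*} [Field K] [NumberField K] (hdeg : Module.finrank ℚ K = 2)
    (σ : K ≃ₐ[ℚ] K) (hσ : σ ≠ AlgEquiv.refl) (x : K) :
    x + σ x = algebraMap ℚ K (Algebra.trace ℚ K x) ∧ x * σ x = algebraMap ℚ K (Algebra.norm ℚ x) := by
  classical
  have : Algebra.IsQuadraticExtension ℚ K := ⟨hdeg⟩
  have : IsGalois ℚ K := inferInstance
  have hc : Fintype.card (K ≃ₐ[ℚ] K) = 2 := by
    rw [← Nat.card_eq_fintype_card, IsGalois.card_aut_eq_finrank, hdeg]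
  have hu : (Finset.univ : Finset (K ≃ₐ[ℚ] K)) = {AlgEquiv.refl, σ} := by
    symm
    rw [← Finset.card_eq_iff_eq_univ, hc, Finset.card_pair hσ.symm]
  rw [trace_eq_sum_automorphisms, Algebra.norm_eq_prod_automorphisms, hu,
    Finset.sum_pair hσ.symm, Finset.prod_pair hσ.symm]
  simp

theorem aux_int {K : Type*} [Field K] [NumberField K] (hdeg : Module.finrank ℚ K = 2)
    (σ : K ≃ₐ[ℚ] K) (hσ : σ ≠ AlgEquiv.refl) (x : K) (hx : IsIntegral ℤ x) :
    (∃ m : ℤ, x + σ x = m) ∧ (∃ m : ℤ, x * σ x = m) := by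
  obtain ⟨h1, h2⟩ := aux_quad hdeg σ hσ x
  obtain ⟨t, ht⟩ := IsIntegrallyClosed.isIntegral_iff.1 (Algebra.isIntegral_trace (L := ℚ) hx)
  obtain ⟨n, hn⟩ := IsIntegrallyClosed.isIntegral_iff.1 (Algebra.isIntegral_norm ℚ hx)
  refine ⟨⟨t, ?_⟩, ⟨n, ?_⟩⟩
  · rw [h1, ← ht]; simp
  · rw [h2, ← hn]; simp

theorem aux_dvd {K : Type*} [Field K] [NumberField K] (σ : K ≃ₐ[ℚ] K) (z : 𝓞 K) (m s q : ℤ)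
    (hm : m ≠ 0) (h1 : (z : K) + σ z = m * s) (h2 : (z : K) * σ z = m ^ 2 * q) :
    (m : 𝓞 K) ∣ z := by
  have hm' : (m : K) ≠ 0 := by exact_mod_cast hm
  have hint : IsIntegral ℤ ((z : K) / m) := by
    refine ⟨Polynomial.X ^ 2 + (Polynomial.C (-s) * Polynomial.X + Polynomial.C q), ?_, ?_⟩
    · refine Polynomial.monic_X_pow_add ?_
      exact lt_of_le_of_lt Polynomial.degree_linear_le (by norm_num)
    · simp only [Polynomial.eval₂_add, Polynomial.eval₂_mul, Polynomial.eval₂_pow,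
        Polynomial.eval₂_X, Polynomial.eval₂_C]
      simp only [eq_intCast, Int.cast_neg]
      field_simp
      linear_combination (z : K) * h1 - h2
  obtain ⟨y, hy⟩ : ∃ y : 𝓞 K, (y : K) = (z : K) / m := ⟨⟨_, hint⟩, rfl⟩
  refine ⟨y, ?_⟩
  apply RingOfIntegers.coe_injective
  have : (z : K) = m * ((z : K) / m) := by field_simp
  rw [← hy] at this
  rw [map_mul, map_intCast]
  exact this

theorem aux_ideal {K : Type*} [Field K] [NumberField K] (hdeg : Module.finrank ℚ K = 2)
    (σ : K ≃ₐ[ℚ] K) (hσ : σ ≠ AlgEquiv.refl) (I : Ideal (𝓞 K)) (hI : I ≠ ⊥) :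
    Nonempty ((𝓞 K × 𝓞 K) ≃ₗ[𝓞 K]
      (I × (I.comap (RingOfIntegers.mapRingEquiv σ.toRingEquiv).symm : Ideal (𝓞 K)))) := by
  set τ := RingOfIntegers.mapRingEquiv σ.toRingEquiv with hτ
  have hτσ : ∀ x : 𝓞 K, ((τ x : 𝓞 K) : K) = σ x := fun x => rfl
  have hss : ∀ x : K, σ (σ x) = x := by
    intro x
    have h := (aux_quad hdeg σ hσ x).1
    have h' := congrArg σ h
    rw [map_add, AlgEquiv.commutes, ← h] at h'
    linear_combination h'
  obtain ⟨a, ha, ha0⟩ := Submodule.exists_mem_ne_zero_of_ne_bot hI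
  obtain ⟨b, hab⟩ := IsDedekindDomain.exists_sup_span_eq (I := Ideal.span {a}) (J := I)
    ((Ideal.span_singleton_le_iff_mem I).2 ha) (by simpa using ha0)
  have hb : b ∈ I := by
    rw [← hab]; exact Ideal.mem_sup_right (Ideal.mem_span_singleton_self b)
  have hgen : ∀ i ∈ I, ∃ x y, i = x * a + y * b := by
    intro i hi
    rw [← hab] at hi
    obtain ⟨y, hy, z, hz, rfl⟩ := Submodule.mem_sup.1 hi
    obtain ⟨p, rfl⟩ := Ideal.mem_span_singleton'.1 hy
    obtain ⟨q, rfl⟩ := Ideal.mem_span_singleton'.1 hz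
    exact ⟨p, q, rfl⟩
  obtain ⟨A, hA⟩ := (aux_int hdeg σ hσ a a.isIntegral_coe).2
  obtain ⟨B, hB⟩ := (aux_int hdeg σ hσ b b.isIntegral_coe).2
  obtain ⟨T, hT⟩ := (aux_int hdeg σ hσ (a * τ b : 𝓞 K) (a * τ b).isIntegral_coe).1
  have hA0 : A ≠ 0 := by
    rintro rfl
    have : (a : K) ≠ 0 := by simpa using ha0
    have h2 : σ (a : K) ≠ 0 := by simpa using ha0
    exact mul_ne_zero this h2 (by simpa using hA)
  have hAO : a * τ a = (A : 𝓞 K) := RingOfIntegers.coe_injective (by simpa [hτσ] using hA)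
  have hBO : b * τ b = (B : 𝓞 K) := RingOfIntegers.coe_injective (by simpa [hτσ] using hB)
  have hTO : a * τ b + b * τ a = (T : 𝓞 K) := RingOfIntegers.coe_injective (by
    have := hT
    simp only [map_mul, hτσ, hss] at this
    simp only [map_add, map_mul, hτσ, map_intCast]
    linear_combination this)
  obtain ⟨m, hmA, hmB, hmT, u, v, w, huvw⟩ : ∃ m : ℤ, m ∣ A ∧ m ∣ B ∧ m ∣ T ∧
      ∃ u v w : ℤ, m = u * A + v * T + w * B := by
    refine ⟨((Int.gcd (Int.gcd A T) B : ℕ) : ℤ), ?_, ?_, ?_, ?_⟩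
    · exact (Int.gcd_dvd_left ..).trans (Int.gcd_dvd_left ..)
    · exact Int.gcd_dvd_right ..
    · exact (Int.gcd_dvd_left ..).trans (Int.gcd_dvd_right ..)
    · have h1 := Int.gcd_eq_gcd_ab A T
      have h2 := Int.gcd_eq_gcd_ab (Int.gcd A T) B
      refine ⟨A.gcdA T * Int.gcdA (Int.gcd A T) B, A.gcdB T * Int.gcdA (Int.gcd A T) B,
        Int.gcdB (Int.gcd A T) B, ?_⟩
      rw [h2]
      linear_combination (Int.gcdA (Int.gcd A T) B) * h1
  have hm0 : m ≠ 0 := by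
    rintro rfl
    exact hA0 (zero_dvd_iff.1 hmA)
  have hd1 : (m : 𝓞 K) ∣ a * τ b := by
    obtain ⟨s, rfl⟩ := hmT
    obtain ⟨p, rfl⟩ := hmA
    obtain ⟨q, rfl⟩ := hmB
    refine aux_dvd σ _ m s (p * q) hm0 (by simpa using hT) ?_
    push_cast at hA hB ⊢
    simp only [map_mul, hτσ, hss]
    linear_combination (b * σ b : K) * hA + (m * p : K) * hB
  have hdT : (m : 𝓞 K) ∣ (T : 𝓞 K) := (Int.cast_dvd_cast _ _ hmT)
  have hd2 : (m : 𝓞 K) ∣ b * τ a := by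
    have : b * τ a = T - a * τ b := by rw [← hTO]; ring
    rw [this]
    exact dvd_sub hdT hd1
  have hdA : (m : 𝓞 K) ∣ a * τ a := hAO ▸ (Int.cast_dvd_cast _ _ hmA)
  have hdB : (m : 𝓞 K) ∣ b * τ b := hBO ▸ (Int.cast_dvd_cast _ _ hmB)
  have hJ : ∀ x ∈ I, τ x ∈ I.comap τ.symm := fun x hx => by simpa [Ideal.mem_comap] using hx
  refine aux_prod I (I.comap τ.symm) a b (u * τ a + v * τ b) (v * τ a + w * τ b) (m : 𝓞 K) ha hb
    (Ideal.add_mem _ (Ideal.mul_mem_left _ _ (hJ a ha)) (Ideal.mul_mem_left _ _ (hJ b hb)))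
    (Ideal.add_mem _ (Ideal.mul_mem_left _ _ (hJ a ha)) (Ideal.mul_mem_left _ _ (hJ b hb)))
    ?_ (by exact_mod_cast hm0) ?_
  · rw [huvw]
    push_cast
    linear_combination (u : 𝓞 K) * hAO + (v : 𝓞 K) * hTO + (w : 𝓞 K) * hBO
  · intro i hi j hj
    obtain ⟨x, y, rfl⟩ := hgen i hi
    obtain ⟨x', y', h⟩ := hgen _ (Ideal.mem_comap.1 hj)
    have hj' : j = τ x' * τ a + τ y' * τ b := by
      rw [← map_mul, ← map_mul, ← map_add, ← h]
      exact (τ.apply_symm_apply j).symm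
    rw [hj']
    have : (x * a + y * b) * (τ x' * τ a + τ y' * τ b) =
      (x * τ x') * (a * τ a) + (x * τ y') * (a * τ b) + (y * τ x') * (b * τ a)
        + (y * τ y') * (b * τ b) := by ring
    rw [this]
    exact dvd_add (dvd_add (dvd_add (hdA.mul_left _) (hd1.mul_left _)) (hd2.mul_left _))
      (hdB.mul_left _)

/-- Let `K` be an imaginary quadratic field, `σ` the nontrivial automorphism
of `K/ℚ` (complex conjugation), and `L` a finitely generated `𝓞 K`-submodule of `K^g` with
full `K`-span.  If `σ(L) ≅ L` as `𝓞 K`-modules, then `L ⊕ L` is a free `𝓞 K`-module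
(the Steinitz class of `L` has order at most `2`). -/
theorem stmt_13
    (K : Type*) [Field K] [NumberField K]
    (hdeg : Module.finrank ℚ K = 2)
    (hcplx : IsEmpty (K →+* ℝ))
    (σ : K ≃ₐ[ℚ] K) (hσ : σ ≠ AlgEquiv.refl)
    (g : ℕ) (hg : 1 ≤ g)
    (L : Submodule (𝓞 K) (Fin g → K))
    (hfg : L.FG)
    (hspan : Submodule.span K (L : Set (Fin g → K)) = ⊤)
    (hiso : Nonempty
      ((Submodule.span (𝓞 K) {v : Fin g → K | ∃ w ∈ L, v = fun i => σ (w i)}) ≃ₗ[𝓞 K] L)) :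
    Module.Free (𝓞 K) (↥L × ↥L) := by
  have hfree : ∀ I : Ideal (𝓞 K), Module.Free (𝓞 K)
      (I × (I.comap (RingOfIntegers.mapRingEquiv σ.toRingEquiv).symm : Ideal (𝓞 K))) := by
    intro I
    by_cases hI : I = ⊥
    · subst hI
      have : Subsingleton ((⊥ : Ideal (𝓞 K)).comap
          (RingOfIntegers.mapRingEquiv σ.toRingEquiv).symm : Ideal (𝓞 K)) := by
        refine ⟨fun x y => Subtype.ext ?_⟩
        apply (RingOfIntegers.mapRingEquiv σ.toRingEquiv).symm.injective
        exact (Ideal.mem_bot.1 (Ideal.mem_comap.1 x.2)).trans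
          (Ideal.mem_bot.1 (Ideal.mem_comap.1 y.2)).symm
      exact Module.Free.of_subsingleton _ _
    · obtain ⟨e⟩ := aux_ideal hdeg σ hσ I hI
      exact Module.Free.of_equiv e
  have hproj : ∀ I : Ideal (𝓞 K), Module.Projective (𝓞 K) I := by
    intro I
    have := hfree I
    exact Module.Projective.of_split (LinearMap.inl (𝓞 K) I
      (I.comap (RingOfIntegers.mapRingEquiv σ.toRingEquiv).symm : Ideal (𝓞 K)))
      (LinearMap.fst _ _ _) (by ext; simp)
  obtain ⟨f, hf⟩ := aux_embed g L hfg
  obtain ⟨n, I, ⟨e⟩⟩ := aux_decomp hproj g f hf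
  obtain ⟨e'⟩ := aux_sigma σ g n L I e
  obtain ⟨e''⟩ := hiso
  let P : (∀ i, (I i × ((I i).comap (RingOfIntegers.mapRingEquiv σ.toRingEquiv).symm :
      Ideal (𝓞 K)))) ≃ₗ[𝓞 K] ((∀ i, I i) ×
        (∀ i, ((I i).comap (RingOfIntegers.mapRingEquiv σ.toRingEquiv).symm : Ideal (𝓞 K)))) :=
    { toFun := fun v => (fun i => (v i).1, fun i => (v i).2)
      invFun := fun v i => (v.1 i, v.2 i)
      left_inv := fun _ => rfl
      right_inv := fun _ => rfl
      map_add' := fun _ _ => rfl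
      map_smul' := fun _ _ => rfl }
  have := fun i => hfree (I i)
  exact Module.Free.of_equiv (P.trans (e.symm.prodCongr (e'.trans e'')))
end

section
/- Let g be odd and let σ be the nontrivial automorphism of K over ℚ, acting coordinatewise on K^g. Let L be a finitely generated 𝓞_K-submodule of K^g whose K-span is all of K^g. Suppose that L is isomorphic as an 𝓞_K-module to 𝔞·L (the submodule generated by {a·v : a ∈ 𝔞, v ∈ L}) for every nonzero fractional ideal 𝔞 of 𝓞_K, and that σ(L) is isomorphic to L as an 𝓞_K-module. Then L is a free 𝓞_K-module, i.e. L ≅ 𝓞_K^g. -/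
open NumberField

set_option linter.unusedSectionVars false

section Steinitz
variable {R : Type*} [CommRing R] [IsDedekindDomain R]

lemma sz_smulEquiv (a : R) (ha : a ≠ 0) (I : Ideal R) :
    Nonempty (I ≃ₗ[R] (Ideal.span {a} * I : Ideal R)) := by
  have h : Submodule.map (LinearMap.mulLeft R a) I = Ideal.span {a} * I := by
    ext x
    simp [Ideal.mem_span_singleton_mul]
  have hinj : Function.Injective (LinearMap.mulLeft R a) := by
    intro x y hxy
    simpa [ha] using hxy
  exact ⟨(Submodule.equivMapOfInjective _ hinj I).trans (LinearEquiv.ofEq _ _ h)⟩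

lemma sz_coprime (I J : Ideal R) (hI : I ≠ ⊥) (hJ : J ≠ ⊥) :
    ∃ I' : Ideal R, I' ≠ ⊥ ∧ Nonempty (I ≃ₗ[R] I') ∧ I' ⊔ J = ⊤ := by
  by_cases hJt : J = ⊤
  · exact ⟨I, hI, ⟨LinearEquiv.refl _ _⟩, by simp [hJt]⟩
  obtain ⟨x, hxI, hx⟩ := Submodule.exists_mem_ne_zero_of_ne_bot hI
  obtain ⟨I₀, hI₀⟩ : I ∣ Ideal.span {x} := Ideal.dvd_span_singleton.mpr hxI
  have hI₀0 : I₀ ≠ ⊥ := by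
    rintro rfl
    simp [hx] at hI₀
  obtain ⟨a, ha⟩ := IsDedekindDomain.exists_sup_span_eq (I := I₀ * J) (J := I₀)
    Ideal.mul_le_left (mul_ne_zero hI₀0 hJ)
  have ha0 : a ≠ 0 := by
    rintro rfl
    apply hJt
    have : I₀ * J = I₀ * ⊤ := by simpa using ha
    exact mul_left_cancel₀ hI₀0 this
  obtain ⟨I', hI'⟩ : I₀ ∣ Ideal.span {a} := Ideal.dvd_span_singleton.mpr (by
    rw [← ha]; exact Ideal.mem_sup_right (Ideal.mem_span_singleton_self a))
  refine ⟨I', ?_, ?_, ?_⟩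
  · rintro rfl
    simp [ha0] at hI'
  · obtain ⟨e1⟩ := sz_smulEquiv a ha0 I
    obtain ⟨e2⟩ := sz_smulEquiv x hx I'
    have : Ideal.span {a} * I = Ideal.span {x} * I' := by
      rw [hI', hI₀]; ring
    exact ⟨e1.trans ((LinearEquiv.ofEq _ _ this).trans e2.symm)⟩
  · have : I₀ * (I' ⊔ J) = I₀ * ⊤ := by
      rw [Ideal.mul_sup, ← hI', sup_comm, ha]; simp
    exact mul_left_cancel₀ hI₀0 this

lemma sz_prod (I J : Ideal R) (h : I ⊔ J = ⊤) :
    Nonempty ((I × J) ≃ₗ[R] (R × (I * J : Ideal R))) := by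
  obtain ⟨i, hi, j, hj, hij⟩ := Submodule.mem_sup.mp ((Ideal.eq_top_iff_one _).mp h)
  let f : (I × J) →ₗ[R] R × (I * J : Ideal R) :=
    { toFun := fun p => (p.1.1 + p.2.1, ⟨j * p.1.1 - i * p.2.1,
        sub_mem (by have := Ideal.mul_mem_mul p.1.2 hj; rwa [mul_comm (p.1 : R) j] at this)
          (Ideal.mul_mem_mul hi p.2.2)⟩)
      map_add' := by
        rintro ⟨p, q⟩ ⟨p', q'⟩
        ext <;> simp <;> ring
      map_smul' := by
        rintro r ⟨p, q⟩
        ext <;> simp <;> ring }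
  refine ⟨LinearEquiv.ofBijective f ⟨?_, ?_⟩⟩
  · rw [injective_iff_map_eq_zero]
    rintro ⟨⟨p, hp⟩, ⟨q, hq⟩⟩ hpq
    have h1 : p + q = 0 := congrArg Prod.fst hpq
    have h2 : j * p - i * q = 0 := congrArg (fun z => (z.2 : R)) hpq
    have hp0 : p = 0 := by linear_combination (i) * h1 + h2 - p * hij
    have hq0 : q = 0 := by linear_combination h1 - hp0
    subst hp0 hq0
    rfl
  · rintro ⟨s, ⟨t, ht⟩⟩
    refine ⟨(⟨i * s + t, add_mem (Ideal.mul_mem_right _ _ hi) (Ideal.mul_le_left ht)⟩,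
      ⟨j * s - t, sub_mem (Ideal.mul_mem_right _ _ hj) (Ideal.mul_le_right ht)⟩), ?_⟩
    ext
    · change (i * s + t) + (j * s - t) = s
      linear_combination s * hij
    · change j * (i * s + t) - i * (j * s - t) = t
      linear_combination t * hij

lemma sz_split {M N : Type*} [AddCommGroup M] [Module R M] [AddCommGroup N] [Module R N]
    [Module.Projective R N] (f : M →ₗ[R] N) (hf : LinearMap.range f = ⊤) :
    Nonempty (M ≃ₗ[R] (LinearMap.ker f × N)) := by
  obtain ⟨s, hs⟩ := f.exists_rightInverse_of_surjective hf
  have hs' : ∀ n, f (s n) = n := fun n => LinearMap.congr_fun hs n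
  refine ⟨(LinearEquiv.ofBijective ((LinearMap.ker f).subtype.coprod s) ⟨?_, ?_⟩).symm⟩
  · rw [injective_iff_map_eq_zero]
    rintro ⟨⟨k, hk⟩, n⟩ h
    have h0 : k + s n = 0 := by simpa using h
    have h1 : n = 0 := by
      have := congrArg f h0
      rw [map_add, hs', LinearMap.mem_ker.mp hk] at this
      simpa using this
    subst h1
    have : k = 0 := by simpa using h0
    subst this
    rfl
  · intro m
    refine ⟨(⟨m - s (f m), by simp [hs']⟩, f m), by simp⟩

lemma sz_projective {M : Type*} [AddCommGroup M] [Module R M] [Module.Finite R M]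
    [Module.IsTorsionFree R M] : Module.Projective R M :=
  haveI : Module.FinitePresentation R M := Module.finitePresentation_of_finite R M
  Module.Flat.projective_of_finitePresentation

lemma steinitz (n : ℕ) : ∀ {M : Type _} [AddCommGroup M] [Module R M] [Module.Finite R M]
    [Module.IsTorsionFree R M] (_ : Module.finrank R M = n + 1),
    ∃ I : Ideal R, I ≠ ⊥ ∧ Nonempty (M ≃ₗ[R] ((Fin n → R) × I)) := by
  induction n with
  | zero =>
    intro M _ _ _ _ hM
    have := sz_projective (R := R) (M := M)
    have : Nontrivial M := by
      rw [← not_subsingleton_iff_nontrivial, ← Module.finrank_zero_iff (R := R)]; omega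
    obtain ⟨m, hm⟩ := exists_ne (0 : M)
    have := (Module.forall_dual_apply_eq_zero_iff R m).not.mpr hm
    push Not at this
    obtain ⟨φ, hφ⟩ := this
    have hI : LinearMap.range φ ≠ ⊥ := by
      intro h
      exact hφ (by simpa [h] using LinearMap.mem_range_self φ m)
    have hfr := Submodule.finrank_quotient_add_finrank (LinearMap.ker φ)
    rw [φ.quotKerEquivRange.finrank_eq, hM] at hfr
    have hr : Module.finrank R (LinearMap.range φ) ≠ 0 := by
      rw [Ne, Module.finrank_zero_iff, Submodule.subsingleton_iff_eq_bot]; exact hI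
    have hk : Module.finrank R (LinearMap.ker φ) = 0 := by omega
    rw [Module.finrank_zero_iff, Submodule.subsingleton_iff_eq_bot] at hk
    refine ⟨LinearMap.range φ, hI, ⟨?_⟩⟩
    exact (LinearEquiv.ofInjective φ (LinearMap.ker_eq_bot.mp hk)).trans
      (LinearEquiv.uniqueProd (R := R) (M := LinearMap.range φ) (M₂ := Fin 0 → R)).symm
  | succ n ih =>
    intro M _ _ _ _ hM
    have := sz_projective (R := R) (M := M)
    have : Nontrivial M := by
      rw [← not_subsingleton_iff_nontrivial, ← Module.finrank_zero_iff (R := R)]; omega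
    obtain ⟨m, hm⟩ := exists_ne (0 : M)
    have := (Module.forall_dual_apply_eq_zero_iff R m).not.mpr hm
    push Not at this
    obtain ⟨φ, hφ⟩ := this
    have hI : LinearMap.range φ ≠ ⊥ := by
      intro h
      exact hφ (by simpa [h] using LinearMap.mem_range_self φ m)
    have hfr := Submodule.finrank_quotient_add_finrank (LinearMap.ker φ)
    rw [φ.quotKerEquivRange.finrank_eq, hM] at hfr
    have hr : Module.finrank R (LinearMap.range φ) ≠ 0 := by
      rw [Ne, Module.finrank_zero_iff, Submodule.subsingleton_iff_eq_bot]; exact hI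
    have hr' : Module.finrank R (LinearMap.range φ) ≤ 1 := by
      simpa using Submodule.finrank_le (R := R) (LinearMap.range φ)
    obtain ⟨I, hI0, ⟨e⟩⟩ := ih (M := LinearMap.ker φ) (by omega)
    have := sz_projective (R := R) (M := LinearMap.range φ)
    obtain ⟨e1⟩ := sz_split φ.rangeRestrict (by simp)
    rw [LinearMap.ker_rangeRestrict] at e1
    obtain ⟨I', hI', ⟨e2⟩, hcop⟩ := sz_coprime I (LinearMap.range φ) hI0 hI
    obtain ⟨e3⟩ := sz_prod I' (LinearMap.range φ) hcop
    refine ⟨I' * LinearMap.range φ, mul_ne_zero hI' hI, ⟨?_⟩⟩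
    refine e1.trans <| (LinearEquiv.prodCongr e (LinearEquiv.refl R _)).trans <|
      (LinearEquiv.prodAssoc R _ _ _).trans <|
      (LinearEquiv.prodCongr (LinearEquiv.refl R _)
        ((LinearEquiv.prodCongr e2 (LinearEquiv.refl R _)).trans e3)).trans <|
      (LinearEquiv.prodAssoc R _ _ _).symm.trans <|
      LinearEquiv.prodCongr ((LinearEquiv.prodComm R _ _).trans
        (Fin.consLinearEquiv R (fun _ : Fin (n+1) => R))) (LinearEquiv.refl R _)
end Steinitz

section DetSub
variable {R K : Type*} [CommRing R] [IsDomain R] [Field K] [Algebra R K] [IsFractionRing R K]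

def detSub {g : ℕ} (L : Submodule R (Fin g → K)) : Submodule R K :=
  Submodule.span R {x | ∃ v : Fin g → Fin g → K, (∀ i, v i ∈ L) ∧ x = Matrix.det (Matrix.of v)}

lemma detSub_mem {g : ℕ} {L : Submodule R (Fin g → K)} {v : Fin g → Fin g → K}
    (hv : ∀ i, v i ∈ L) : Matrix.det (Matrix.of v) ∈ detSub L :=
  Submodule.subset_span ⟨v, hv, rfl⟩

lemma det_mem_of_span {g : ℕ} (S : Set (Fin g → K)) (P : Submodule R K)
    (h : ∀ v : Fin g → Fin g → K, (∀ i, v i ∈ S) → Matrix.det (Matrix.of v) ∈ P) :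
    ∀ v : Fin g → Fin g → K, (∀ i, v i ∈ Submodule.span R S) → Matrix.det (Matrix.of v) ∈ P := by
  have key : ∀ s : Finset (Fin g), ∀ v : Fin g → Fin g → K,
      (∀ i ∈ s, v i ∈ Submodule.span R S) → (∀ i ∉ s, v i ∈ S) →
      Matrix.detRowAlternating v ∈ P := by
    intro s
    induction s using Finset.induction_on with
    | empty => intro v _ h2; exact h v (fun i => h2 i (by simp))
    | insert a s ha ih =>
      intro v h1 h2
      suffices H : ∀ x ∈ Submodule.span R S,
          Matrix.detRowAlternating (Function.update v a x) ∈ P by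
        simpa using H (v a) (h1 a (by simp))
      intro x hx
      induction hx using Submodule.span_induction with
      | mem x hx =>
        apply ih
        · intro i hi
          have : i ≠ a := by rintro rfl; exact ha hi
          rw [Function.update_of_ne this]
          exact h1 i (by simp [hi])
        · intro i hi
          by_cases hia : i = a
          · subst hia; simpa using hx
          · rw [Function.update_of_ne hia]
            exact h2 i (by simp [hi, hia])
      | zero =>
        rw [AlternatingMap.map_update_zero]; exact P.zero_mem
      | add x y _ _ hx hy =>
        rw [AlternatingMap.map_update_add]; exact P.add_mem hx hy
      | smul r x _ hx =>
        rw [← algebraMap_smul K r x, AlternatingMap.map_update_smul, algebraMap_smul]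
        exact P.smul_mem _ hx
  intro v hv
  exact key Finset.univ v (fun i _ => hv i) (by simp)

lemma detSub_fg {g : ℕ} {L : Submodule R (Fin g → K)} (hL : L.FG) : (detSub L).FG := by
  obtain ⟨S, rfl⟩ := hL
  have hfin : (Set.pi Set.univ (fun _ : Fin g => (S : Set (Fin g → K)))).Finite :=
    Set.Finite.pi' (fun _ => S.finite_toSet) |>.subset (by intro v hv i; exact hv i trivial)
  have : detSub (Submodule.span R (S : Set (Fin g → K))) = Submodule.span R
      ((fun v => Matrix.det (Matrix.of v)) ''
        (Set.pi Set.univ (fun _ : Fin g => (S : Set (Fin g → K))))) := by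
    apply le_antisymm
    · refine Submodule.span_le.mpr ?_
      rintro x ⟨v, hv, rfl⟩
      refine det_mem_of_span (S : Set (Fin g → K)) _ ?_ v hv
      intro v hv
      exact Submodule.subset_span ⟨v, fun i _ => hv i, rfl⟩
    · refine Submodule.span_le.mpr ?_
      rintro x ⟨v, hv, rfl⟩
      exact detSub_mem (fun i => Submodule.subset_span (hv i trivial))
  rw [this]
  exact Submodule.fg_span (hfin.image _)

lemma lattice_isLocalizedModule {g : ℕ} {L : Submodule R (Fin g → K)}
    (hspan : Submodule.span K (L : Set (Fin g → K)) = ⊤) :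
    IsLocalizedModule (nonZeroDivisors R) L.subtype := by
  refine ⟨?_, ?_, ?_⟩
  · intro x
    have hx : algebraMap R K x ≠ 0 := IsFractionRing.to_map_ne_zero_of_mem_nonZeroDivisors x.2
    rw [Module.End.isUnit_iff]
    constructor
    · rw [injective_iff_map_eq_zero]
      intro v hv
      have : algebraMap R K x • v = 0 := by simpa using hv
      exact (smul_eq_zero.mp this).resolve_left hx
    · intro v
      refine ⟨(algebraMap R K x)⁻¹ • v, ?_⟩
      simp only [Module.algebraMap_end_apply]
      rw [← algebraMap_smul K (x : R), smul_smul, mul_inv_cancel₀ hx, one_smul]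
  · intro y
    have hy : y ∈ Submodule.span K (L : Set (Fin g → K)) := by rw [hspan]; trivial
    induction hy using Submodule.span_induction with
    | mem x hx => exact ⟨(⟨x, hx⟩, 1), by simp⟩
    | zero => exact ⟨(0, 1), by simp⟩
    | add x y _ _ hx hy =>
      obtain ⟨⟨a, s⟩, ha⟩ := hx
      obtain ⟨⟨b, t⟩, hb⟩ := hy
      refine ⟨(t • a + s • b, s * t), ?_⟩
      simp only [map_add, Submonoid.smul_def, map_smul] at ha hb ⊢
      rw [← ha, ← hb]
      simp only [Submonoid.coe_mul, smul_add, smul_smul]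
      rw [mul_comm (t : R) s]
    | smul c x _ hx =>
      obtain ⟨⟨a, s⟩, ha⟩ := hx
      obtain ⟨r, t, ht, rfl⟩ := IsFractionRing.div_surjective (A := R) c
      refine ⟨(r • a, ⟨t, ht⟩ * s), ?_⟩
      have ht' : algebraMap R K t ≠ 0 := IsFractionRing.to_map_ne_zero_of_mem_nonZeroDivisors ht
      simp only [map_smul, Submonoid.smul_def] at ha ⊢
      rw [← ha]
      simp only [Submonoid.coe_mul, ← algebraMap_smul K (_ : R), smul_smul, map_mul]
      congr 1
      field_simp
  · intro x y h
    exact ⟨1, by rw [Subtype.ext h]⟩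

lemma lattice_finrank {g : ℕ} {L : Submodule R (Fin g → K)}
    (hspan : Submodule.span K (L : Set (Fin g → K)) = ⊤) : Module.finrank R L = g := by
  have := lattice_isLocalizedModule hspan
  rw [← IsLocalizedModule.finrank_eq (nonZeroDivisors R) L.subtype le_rfl,
    ← IsLocalization.finrank_eq K (nonZeroDivisors R) le_rfl]
  simp

lemma detSub_equiv {g : ℕ} {L L' : Submodule R (Fin g → K)}
    (hspan : Submodule.span K (L : Set (Fin g → K)) = ⊤) (e : L ≃ₗ[R] L') :
    ∃ c : K, detSub L' = Submodule.span R {c} * detSub L := by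
  have := lattice_isLocalizedModule hspan
  let A₀ : (Fin g → K) →ₗ[R] (Fin g → K) := IsLocalizedModule.lift (nonZeroDivisors R) L.subtype
    (L'.subtype ∘ₗ e.toLinearMap) (IsLocalizedModule.map_units L.subtype)
  let A : (Fin g → K) →ₗ[K] (Fin g → K) := A₀.extendScalarsOfIsLocalization (nonZeroDivisors R) K
  have hA : ∀ x : L, A x = e x := fun x =>
    IsLocalizedModule.lift_apply (nonZeroDivisors R) L.subtype _ (IsLocalizedModule.map_units L.subtype) x
  have hdet : ∀ v : Fin g → Fin g → K, Matrix.det (Matrix.of (fun i => A (v i))) =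
      LinearMap.det A * Matrix.det (Matrix.of v) := by
    intro v
    have := (Pi.basisFun K (Fin g)).det_comp A v
    rwa [Pi.basisFun_det_apply, Pi.basisFun_det_apply] at this
  refine ⟨LinearMap.det A, ?_⟩
  rw [detSub, detSub, Submodule.span_mul_span]
  congr 1
  ext x
  simp only [Set.singleton_mul, Set.mem_image, Set.mem_ofPred_eq]
  constructor
  · rintro ⟨v, hv, rfl⟩
    refine ⟨_, ⟨fun i => (e.symm ⟨v i, hv i⟩ : Fin g → K), fun i => (e.symm ⟨v i, hv i⟩).2, rfl⟩, ?_⟩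
    rw [← hdet]
    simp [hA]
  · rintro ⟨_, ⟨v, hv, rfl⟩, rfl⟩
    refine ⟨fun i => A (v i), fun i => ?_, (hdet v).symm⟩
    have h := (e ⟨v i, hv i⟩).2
    rw [← hA] at h
    exact h

lemma detSub_ne_bot {g : ℕ} {L : Submodule R (Fin g → K)}
    (hspan : Submodule.span K (L : Set (Fin g → K)) = ⊤) : detSub L ≠ ⊥ := by
  intro h
  have h0 : ∀ v : Fin g → Fin g → K, (∀ i, v i ∈ L) → Matrix.det (Matrix.of v) ∈ (⊥ : Submodule K K) := by
    intro v hv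
    have := detSub_mem hv
    rw [h] at this
    simpa using this
  have := det_mem_of_span (R := K) (L : Set (Fin g → K)) ⊥ h0 (fun i => Pi.single i 1)
    (by rw [hspan]; simp)
  have h1 : (Matrix.of (fun i : Fin g => (Pi.single i 1 : Fin g → K))) = 1 := by
    ext i j
    simp [Matrix.one_apply, Pi.single_apply, eq_comm]
  rw [h1] at this
  simp at this

lemma detSub_smul {g : ℕ} (L : Submodule R (Fin g → K)) (𝔞 : Submodule R K) :
    detSub (Submodule.span R {x : Fin g → K | ∃ a ∈ 𝔞, ∃ v ∈ L, x = a • v}) =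
      𝔞 ^ g * detSub L := by
  have hd : ∀ (a : Fin g → K) (w : Fin g → Fin g → K),
      Matrix.det (Matrix.of (fun i => a i • w i)) = (∏ i, a i) * Matrix.det (Matrix.of w) := by
    intro a w
    exact Matrix.det_mul_column a (Matrix.of w)
  apply le_antisymm
  · refine Submodule.span_le.mpr ?_
    rintro x ⟨v, hv, rfl⟩
    refine det_mem_of_span _ _ ?_ v hv
    intro v hv
    choose a ha w hw h using hv
    obtain rfl : v = fun i => a i • w i := funext h
    rw [hd]
    refine Submodule.mul_mem_mul ?_ (detSub_mem hw)
    rw [Submodule.pow_eq_span_pow_set]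
    refine Submodule.subset_span (Set.mem_pow.mpr ⟨fun i => ⟨a i, ha i⟩, ?_⟩)
    rw [List.prod_ofFn]
  · rw [Submodule.pow_eq_span_pow_set, detSub, detSub, Submodule.span_mul_span]
    refine Submodule.span_le.mpr ?_
    rintro _ ⟨p, hp, _, ⟨w, hw, rfl⟩, rfl⟩
    obtain ⟨f, rfl⟩ := Set.mem_pow.mp hp
    refine Submodule.subset_span ⟨fun i => (f i : K) • w i, fun i => ?_, ?_⟩
    · exact Submodule.subset_span ⟨f i, (f i).2, w i, hw i, rfl⟩
    · rw [hd, List.prod_ofFn]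

/-- the standard lattice `I × R^n` -/
def stdLat (n : ℕ) (I : Ideal R) : Submodule R (Fin (n+1) → K) where
  carrier := {v | (∃ x ∈ I, algebraMap R K x = v 0) ∧ ∀ i : Fin n, ∃ y : R, algebraMap R K y = v i.succ}
  zero_mem' := ⟨⟨0, I.zero_mem, by simp⟩, fun i => ⟨0, by simp⟩⟩
  add_mem' := by
    rintro v w ⟨⟨x, hx, h⟩, hv⟩ ⟨⟨y, hy, h'⟩, hw⟩
    refine ⟨⟨x + y, I.add_mem hx hy, by simp [h, h']⟩, fun i => ?_⟩
    obtain ⟨a, ha⟩ := hv i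
    obtain ⟨b, hb⟩ := hw i
    exact ⟨a + b, by simp [ha, hb]⟩
  smul_mem' := by
    rintro r v ⟨⟨x, hx, h⟩, hv⟩
    refine ⟨⟨r * x, I.mul_mem_left r hx, by simp [h, Algebra.smul_def]⟩, fun i => ?_⟩
    obtain ⟨a, ha⟩ := hv i
    exact ⟨r * a, by simp [ha, Algebra.smul_def]⟩

lemma stdLat_equiv (n : ℕ) (I : Ideal R) :
    Nonempty (((Fin n → R) × I) ≃ₗ[R] stdLat (K := K) n I) := by
  have hinj := IsFractionRing.injective R K
  let f : ((Fin n → R) × I) →ₗ[R] stdLat (K := K) n I :=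
    { toFun := fun p => ⟨Fin.cons (algebraMap R K p.2) (fun i => algebraMap R K (p.1 i)),
        ⟨⟨p.2, p.2.2, by simp⟩, fun i => ⟨p.1 i, by simp⟩⟩⟩
      map_add' := by
        intro p q
        ext i
        refine Fin.cases ?_ (fun j => ?_) i <;> simp
      map_smul' := by
        intro r p
        ext i
        refine Fin.cases ?_ (fun j => ?_) i <;> simp [Algebra.smul_def] }
  refine ⟨LinearEquiv.ofBijective f ⟨?_, ?_⟩⟩
  · rintro ⟨p, x⟩ ⟨q, y⟩ h
    have h' : ∀ i, (f (p, x) : Fin (n+1) → K) i = (f (q, y) : Fin (n+1) → K) i :=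
      fun i => by rw [h]
    refine Prod.ext (funext fun i => hinj ?_) (Subtype.ext (hinj ?_))
    · simpa [f] using h' i.succ
    · simpa [f] using h' 0
  · rintro ⟨v, ⟨x, hx, h0⟩, hv⟩
    have hv' := hv
    choose y hy using hv'
    refine ⟨(y, ⟨x, hx⟩), ?_⟩
    ext i
    refine Fin.cases ?_ (fun j => ?_) i <;> simp [f, h0, hy]

lemma detSub_stdLat (n : ℕ) (I : Ideal R) :
    detSub (stdLat (K := K) n I) = Submodule.map (Algebra.linearMap R K) I := by
  apply le_antisymm
  · refine Submodule.span_le.mpr ?_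
    rintro x ⟨v, hv, rfl⟩
    choose h0 hs using hv
    choose y hy hy' using h0
    choose z hz using hs
    have : Matrix.of v = (Matrix.of (fun i => (Fin.cons (y i) (z i) : Fin (n+1) → R))).map (algebraMap R K) := by
      ext i j
      refine Fin.cases ?_ (fun j => ?_) j <;> simp [hy', hz]
    rw [this, ← RingHom.mapMatrix_apply, ← RingHom.map_det]
    refine ⟨_, ?_, rfl⟩
    rw [Matrix.det_succ_column_zero]
    refine Ideal.sum_mem _ fun i _ => ?_
    refine I.mul_mem_right _ (I.mul_mem_left _ ?_)
    simpa using hy i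
  · rintro _ ⟨x, hx, rfl⟩
    have h1 : Matrix.det (Matrix.diagonal (Fin.cons (algebraMap R K x) (fun _ => 1) : Fin (n+1) → K)) = algebraMap R K x := by
      rw [Matrix.det_diagonal, Fin.prod_univ_succ]
      simp
    rw [Algebra.linearMap_apply, ← h1]
    apply detSub_mem (v := fun i j => Matrix.diagonal (Fin.cons (algebraMap R K x) (fun _ => 1) : Fin (n+1) → K) i j)
    intro i
    refine ⟨?_, fun j => ?_⟩
    · refine Fin.cases ?_ (fun k => ?_) i
      · exact ⟨x, hx, by simp⟩
      · exact ⟨0, I.zero_mem, by simp [Matrix.diagonal]⟩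
    · refine Fin.cases ?_ (fun k => ?_) i
      · exact ⟨0, (map_zero _).trans (Matrix.diagonal_apply_ne _ (Fin.succ_ne_zero j).symm).symm⟩
      · by_cases h : k = j
        · exact ⟨1, by simp [h]⟩
        · exact ⟨0, (map_zero _).trans (Matrix.diagonal_apply_ne _ (by simpa using h)).symm⟩
end DetSub

section Quad
variable {K : Type*} [Field K] [NumberField K]

lemma quad_fixed (hdeg : Module.finrank ℚ K = 2) (σ : K ≃ₐ[ℚ] K) (hσ : σ ≠ AlgEquiv.refl)
    (x : K) (hx : σ x = x) (hint : IsIntegral ℤ x) : ∃ n : ℤ, x = n := by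
  have : IsSimpleOrder (IntermediateField ℚ K) :=
    IntermediateField.isSimpleOrder_of_finrank_prime ℚ K (by rw [hdeg]; exact Nat.prime_two)
  let F : IntermediateField ℚ K := IntermediateField.fixedField (Subgroup.zpowers σ)
  have hxF : ∀ y : K, σ y = y → y ∈ F := by
    intro y hy
    rintro ⟨τ, hτ⟩
    have h : Subgroup.zpowers σ ≤ MulAction.stabilizer (K ≃ₐ[ℚ] K) y := by
      rw [Subgroup.zpowers_le]; exact hy
    exact h hτ
  have hF : F = ⊥ := by
    refine (eq_bot_or_eq_top F).resolve_right fun h => hσ ?_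
    ext y
    have hy : y ∈ F := by rw [h]; trivial
    exact hy ⟨σ, Subgroup.mem_zpowers σ⟩
  have hx' := hxF x hx
  rw [hF, IntermediateField.mem_bot] at hx'
  obtain ⟨q, rfl⟩ := hx'
  have hq : IsIntegral ℤ q := (isIntegral_algebraMap_iff (algebraMap ℚ K).injective).mp hint
  obtain ⟨n, rfl⟩ := IsIntegrallyClosed.isIntegral_iff.mp hq
  exact ⟨n, by simp⟩

lemma quad_invol (hdeg : Module.finrank ℚ K = 2) (σ : K ≃ₐ[ℚ] K) (hσ : σ ≠ AlgEquiv.refl)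
    (x : K) : σ (σ x) = x := by
  classical
  have h1 : Fintype.card (K ≃ₐ[ℚ] K) ≤ 2 := hdeg ▸ AlgEquiv.card_le
  have h2 : 1 < Fintype.card (K ≃ₐ[ℚ] K) := Fintype.one_lt_card_iff.mpr ⟨σ, 1, hσ⟩
  have h3 : σ ^ 2 = 1 := by
    have : Fintype.card (K ≃ₐ[ℚ] K) = 2 := by omega
    rw [← this]; exact pow_card_eq_one
  have := DFunLike.congr_fun h3 x
  simpa [pow_two] using this

lemma quad_two_gen (hdeg : Module.finrank ℚ K = 2) (σ : K ≃ₐ[ℚ] K) (hσ : σ ≠ AlgEquiv.refl)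
    (a b : K) (ha : IsIntegral ℤ a) (hb : IsIntegral ℤ b) (ha0 : a ≠ 0) :
    ∃ n : K, n ≠ 0 ∧ Submodule.span (𝓞 K) {a, b} * Submodule.span (𝓞 K) {σ a, σ b} =
      Submodule.span (𝓞 K) {n} := by
  have inv := quad_invol hdeg σ hσ
  have hσi : ∀ {x : K}, IsIntegral ℤ x → IsIntegral ℤ (σ x) := fun hx =>
    hx.map (σ.toAlgHom.restrictScalars ℤ)
  obtain ⟨A, hA⟩ := quad_fixed hdeg σ hσ (a * σ a) (by rw [map_mul, inv, mul_comm]) (ha.mul (hσi ha))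
  obtain ⟨B, hB⟩ := quad_fixed hdeg σ hσ (b * σ b) (by rw [map_mul, inv, mul_comm]) (hb.mul (hσi hb))
  obtain ⟨T, hT⟩ := quad_fixed hdeg σ hσ (a * σ b + b * σ a)
    (by rw [map_add, map_mul, map_mul, inv, inv]; ring)
    ((ha.mul (hσi hb)).add (hb.mul (hσi ha)))
  have hA0 : A ≠ 0 := by
    rintro rfl
    simp [ha0] at hA
  let n : ℤ := Int.gcd A (Int.gcd B T)
  have hn0 : n ≠ 0 := by
    simp only [n, Ne, Nat.cast_eq_zero, Int.gcd_eq_zero_iff]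
    tauto
  have hnK : (n : K) ≠ 0 := by exact_mod_cast hn0
  obtain ⟨A', hA'⟩ : n ∣ A := Int.gcd_dvd_left _ _
  have hnBT : n ∣ (Int.gcd B T : ℤ) := Int.gcd_dvd_right _ _
  obtain ⟨B', hB'⟩ : n ∣ B := hnBT.trans (Int.gcd_dvd_left _ _)
  obtain ⟨T', hT'⟩ : n ∣ T := hnBT.trans (Int.gcd_dvd_right _ _)
  -- the elements a σ b / n and b σ a / n are integral
  have key : ∀ x y : K, x * y = (A * B : ℤ) → x + y = T → ∃ z : 𝓞 K, x = (z : K) * n := by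
    intro x y h1 h2
    have hi : IsIntegral ℤ (x / n) := by
      refine ⟨Polynomial.X ^ 2 - Polynomial.C T' * Polynomial.X + Polynomial.C (A' * B'), ?_, ?_⟩
      · monicity!
      · simp only [Polynomial.eval₂_add, Polynomial.eval₂_sub, Polynomial.eval₂_mul,
          Polynomial.eval₂_pow, Polynomial.eval₂_X, Polynomial.eval₂_C]
        rw [hA', hB'] at h1
        rw [hT'] at h2
        push_cast at h1 h2
        simp only [map_mul, eq_intCast]
        have hy : y = n * T' - x := by linear_combination h2
        rw [hy] at h1
        field_simp
        linear_combination -h1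
    exact ⟨⟨x / n, hi⟩, by change x = x / n * n; field_simp⟩
  refine ⟨n, hnK, ?_⟩
  have hspan : Submodule.span (𝓞 K) {a, b} * Submodule.span (𝓞 K) {σ a, σ b} =
      Submodule.span (𝓞 K) {a * σ a, a * σ b, b * σ a, b * σ b} := by
    rw [Submodule.span_mul_span]
    congr 1
    ext x
    simp [Set.mem_mul]
    tauto
  rw [hspan]
  apply le_antisymm
  · rw [Submodule.span_le]
    have hAB : a * σ a * (b * σ b) = (A * B : ℤ) := by rw [hA, hB]; push_cast; ring
    rintro x (rfl | rfl | rfl | rfl)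
    · exact Submodule.mem_span_singleton.mpr ⟨(A' : 𝓞 K), by
        rw [hA, hA', Algebra.smul_def]; push_cast; simp [mul_comm]⟩
    · obtain ⟨z, hz⟩ := key (a * σ b) (b * σ a) (by rw [← hAB]; ring) hT
      exact Submodule.mem_span_singleton.mpr ⟨z, by rw [hz, Algebra.smul_def]⟩
    · obtain ⟨z, hz⟩ := key (b * σ a) (a * σ b) (by rw [← hAB]; ring) (by rw [← hT]; ring)
      exact Submodule.mem_span_singleton.mpr ⟨z, by rw [hz, Algebra.smul_def]⟩
    · exact Submodule.mem_span_singleton.mpr ⟨(B' : 𝓞 K), by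
        rw [hB, hB', Algebra.smul_def]; push_cast; simp [mul_comm]⟩
  · rw [Submodule.span_singleton_le_iff_mem]
    set W := Submodule.span (𝓞 K) {a * σ a, a * σ b, b * σ a, b * σ b} with hW
    have hz : ∀ (m : ℤ) (x : K), x ∈ W → (m : K) * x ∈ W := by
      intro m x hx
      have := W.smul_mem (m : 𝓞 K) hx
      rw [Algebra.smul_def] at this
      simpa using this
    have hAW : (A : K) ∈ W := by rw [← hA]; exact Submodule.subset_span (by simp)
    have hBW : (B : K) ∈ W := by rw [← hB]; exact Submodule.subset_span (by simp)
    have hTW : (T : K) ∈ W := by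
      rw [← hT]; exact W.add_mem (Submodule.subset_span (by simp)) (Submodule.subset_span (by simp))
    have e1 : (n : ℤ) = A * _ + (Int.gcd B T : ℤ) * _ := Int.gcd_eq_gcd_ab A (Int.gcd B T)
    have e2 := Int.gcd_eq_gcd_ab B T
    rw [e1, e2]
    push_cast
    refine W.add_mem (by rw [mul_comm]; exact hz _ _ hAW) ?_
    rw [mul_comm]
    refine hz _ _ (W.add_mem ?_ ?_)
    · rw [mul_comm]; exact hz _ _ hBW
    · rw [mul_comm]; exact hz _ _ hTW

/-- `σ`-image of a submodule of `K` -/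
def sigSub (σ : K ≃ₐ[ℚ] K) (D : Submodule (𝓞 K) K) : Submodule (𝓞 K) K :=
  Submodule.span (𝓞 K) (σ '' (D : Set K))

lemma sig_smul (σ : K ≃ₐ[ℚ] K) (r : 𝓞 K) : ∃ s : 𝓞 K, (s : K) = σ r :=
  ⟨⟨σ r, (RingOfIntegers.isIntegral_coe r).map (σ.toAlgHom.restrictScalars ℤ)⟩, rfl⟩

lemma sig_mem_span (σ : K ≃ₐ[ℚ] K) {S : Set K} {x : K} (hx : x ∈ Submodule.span (𝓞 K) S) :
    σ x ∈ Submodule.span (𝓞 K) (σ '' S) := by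
  induction hx using Submodule.span_induction with
  | mem x hx => exact Submodule.subset_span ⟨x, hx, rfl⟩
  | zero => simp
  | add x y _ _ hx hy => rw [map_add]; exact add_mem hx hy
  | smul r x _ hx =>
    obtain ⟨s, hs⟩ := sig_smul σ r
    rw [Algebra.smul_def, map_mul]
    have := Submodule.smul_mem _ s hx
    rw [Algebra.smul_def] at this
    convert this using 2
    exact hs.symm

lemma sigSub_span (σ : K ≃ₐ[ℚ] K) (S : Set K) :
    sigSub σ (Submodule.span (𝓞 K) S) = Submodule.span (𝓞 K) (σ '' S) := by
  apply le_antisymm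
  · refine Submodule.span_le.mpr ?_
    rintro _ ⟨x, hx, rfl⟩
    exact sig_mem_span σ hx
  · exact Submodule.span_mono (Set.image_mono Submodule.subset_span)

lemma quad_norm (hdeg : Module.finrank ℚ K = 2) (σ : K ≃ₐ[ℚ] K) (hσ : σ ≠ AlgEquiv.refl)
    (D : Submodule (𝓞 K) K) (hD : D.FG) (hD0 : D ≠ ⊥) :
    ∃ n : K, n ≠ 0 ∧ D * sigSub σ D = Submodule.span (𝓞 K) {n} := by
  obtain ⟨c, hc, J, hJ⟩ : ∃ c : K, c ≠ 0 ∧ ∃ J : Ideal (𝓞 K),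
      D = Submodule.span (𝓞 K) {c} * Submodule.map (Algebra.linearMap (𝓞 K) K) J := by
    let I : FractionalIdeal (nonZeroDivisors (𝓞 K)) K := ⟨D, FractionalIdeal.isFractional_of_fg hD⟩
    obtain ⟨a, J, ha, h⟩ := FractionalIdeal.exists_eq_spanSingleton_mul I
    refine ⟨(algebraMap (𝓞 K) K a)⁻¹, by simpa using ha, J, ?_⟩
    have := congrArg (fun I : FractionalIdeal (nonZeroDivisors (𝓞 K)) K => (I : Submodule (𝓞 K) K)) h
    simp only [FractionalIdeal.coe_mul, FractionalIdeal.coe_spanSingleton,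
      FractionalIdeal.coe_coeIdeal] at this
    exact this
  have hJ0 : J ≠ ⊥ := by
    rintro rfl
    simp at hJ
    exact hD0 hJ
  obtain ⟨x, hxJ, hx⟩ := Submodule.exists_mem_ne_zero_of_ne_bot hJ0
  obtain ⟨y, hy⟩ := IsDedekindDomain.exists_sup_span_eq (I := Ideal.span {x}) (J := J)
    ((Ideal.span_singleton_le_iff_mem _).mpr hxJ) (by simpa using hx)
  rw [Ideal.span, Ideal.span, ← Submodule.span_union] at hy
  have hJ2 : Submodule.map (Algebra.linearMap (𝓞 K) K) J = Submodule.span (𝓞 K) {(x : K), (y : K)} := by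
    rw [← hy, Submodule.map_span]
    congr 1
    ext z
    simp [eq_comm, or_comm]
  have hx' : (x : K) ≠ 0 := by simpa using hx
  obtain ⟨n, hn, hn'⟩ := quad_two_gen hdeg σ hσ x y (RingOfIntegers.isIntegral_coe x)
    (RingOfIntegers.isIntegral_coe y) hx'
  have hσD : sigSub σ D = Submodule.span (𝓞 K) {σ c} * Submodule.span (𝓞 K) {σ x, σ y} := by
    rw [hJ, hJ2, Submodule.span_mul_span, sigSub_span, Submodule.span_mul_span]
    congr 1
    simp [Set.image_pair]
  refine ⟨c * σ c * n, by simp [hc, hn], ?_⟩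
  rw [hσD, hJ, hJ2, mul_mul_mul_comm, hn', Submodule.span_mul_span, Submodule.span_mul_span]
  simp

end Quad

section Final
variable {K : Type*} [Field K] [NumberField K]

lemma detSub_sig (σ : K ≃ₐ[ℚ] K) {g : ℕ} (L : Submodule (𝓞 K) (Fin g → K)) :
    detSub (Submodule.span (𝓞 K) {v : Fin g → K | ∃ w ∈ L, v = fun i => σ (w i)}) =
      sigSub σ (detSub L) := by
  have hd : ∀ w : Fin g → Fin g → K, Matrix.det (Matrix.of (fun i j => σ (w i j))) =
      σ (Matrix.det (Matrix.of w)) := by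
    intro w
    exact (AlgEquiv.map_det σ (Matrix.of w)).symm
  conv_rhs => rw [detSub, sigSub_span]
  apply le_antisymm
  · refine Submodule.span_le.mpr ?_
    rintro x ⟨v, hv, rfl⟩
    refine det_mem_of_span _ _ ?_ v hv
    intro v hv
    choose w hw h using hv
    obtain rfl : v = fun i j => σ (w i j) := funext h
    rw [hd]
    exact Submodule.subset_span ⟨_, ⟨w, hw, rfl⟩, rfl⟩
  · refine Submodule.span_le.mpr ?_
    rintro _ ⟨_, ⟨w, hw, rfl⟩, rfl⟩
    rw [← hd]
    exact detSub_mem (fun i => Submodule.subset_span ⟨w i, hw i, rfl⟩)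

lemma principal_of (D E : Submodule (𝓞 K) K) (hD : D ≠ ⊥) (g : ℕ) (hg : Odd g) (c c₂ n : K)
    (h1 : D ^ g * D = Submodule.span (𝓞 K) {c} * D)
    (h2 : D = Submodule.span (𝓞 K) {c₂} * E)
    (hn : n ≠ 0) (h3 : D * E = Submodule.span (𝓞 K) {n}) :
    ∃ d : K, D = Submodule.span (𝓞 K) {d} := by
  have hmul : ∀ x y : K, Submodule.span (𝓞 K) {x} * Submodule.span (𝓞 K) {y} =
      Submodule.span (𝓞 K) {x * y} := by
    intro x y; rw [Submodule.span_mul_span]; simp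
  have hone : Submodule.span (𝓞 K) {(1 : K)} = 1 := Submodule.one_eq_span.symm
  have hinv : D * (E * Submodule.span (𝓞 K) {n⁻¹}) = 1 := by
    rw [← mul_assoc, h3, hmul, mul_inv_cancel₀ hn, hone]
  have hDg : D ^ g = Submodule.span (𝓞 K) {c} := by
    calc D ^ g = D ^ g * D * (E * Submodule.span (𝓞 K) {n⁻¹}) := by rw [mul_assoc, hinv, mul_one]
      _ = _ := by rw [h1, mul_assoc, hinv, mul_one]
  have hD2 : D ^ 2 = Submodule.span (𝓞 K) {c₂ * n} := by
    calc D ^ 2 = D * D := sq D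
      _ = D * (Submodule.span (𝓞 K) {c₂} * E) := by rw [← h2]
      _ = Submodule.span (𝓞 K) {c₂} * (D * E) := by ring
      _ = _ := by rw [h3, hmul]
  have hc₂ : c₂ ≠ 0 := by
    rintro rfl
    apply hD
    rw [h2]; simp
  obtain ⟨k, rfl⟩ := hg
  refine ⟨c * ((c₂ * n) ^ k)⁻¹, ?_⟩
  have hpow : D ^ (2 * k) = Submodule.span (𝓞 K) {(c₂ * n) ^ k} := by
    rw [pow_mul, hD2, Submodule.span_pow]; simp
  calc D = D * (Submodule.span (𝓞 K) {(c₂ * n) ^ k} * Submodule.span (𝓞 K) {((c₂ * n) ^ k)⁻¹}) := by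
        rw [hmul, mul_inv_cancel₀ (pow_ne_zero _ (mul_ne_zero hc₂ hn)), hone, mul_one]
    _ = D ^ (2 * k + 1) * Submodule.span (𝓞 K) {((c₂ * n) ^ k)⁻¹} := by rw [← hpow]; ring
    _ = _ := by rw [hDg, hmul]
end Final

/-- Let `K` be an imaginary quadratic field, `g` odd, `σ` the nontrivial
automorphism of `K/ℚ`, and `L` a finitely generated `𝓞 K`-submodule of `K^g` with full
`K`-span.  If `L ≅ 𝔞·L` for every nonzero fractional ideal `𝔞` and `σ(L) ≅ L` as
`𝓞 K`-modules, then `L` is free: `L ≅ 𝓞 K ^ g`. -/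
theorem stmt_14
    (K : Type*) [Field K] [NumberField K]
    (hdeg : Module.finrank ℚ K = 2)
    (hcplx : IsEmpty (K →+* ℝ))
    (σ : K ≃ₐ[ℚ] K) (hσ : σ ≠ AlgEquiv.refl)
    (g : ℕ) (hgodd : Odd g)
    (L : Submodule (𝓞 K) (Fin g → K))
    (hfg : L.FG)
    (hspan : Submodule.span K (L : Set (Fin g → K)) = ⊤)
    (hiso : ∀ 𝔞 : FractionalIdeal (nonZeroDivisors (𝓞 K)) K, 𝔞 ≠ 0 →
      Nonempty (L ≃ₗ[𝓞 K]
        (Submodule.span (𝓞 K) {x : Fin g → K | ∃ a ∈ 𝔞, ∃ v ∈ L, x = a • v})))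
    (hconj : Nonempty
      ((Submodule.span (𝓞 K) {v : Fin g → K | ∃ w ∈ L, v = fun i => σ (w i)}) ≃ₗ[𝓞 K] L)) :
    Nonempty (L ≃ₗ[𝓞 K] (Fin g → 𝓞 K)) := by
  
  have hD0 := detSub_ne_bot hspan
  have hDfg := detSub_fg hfg
  obtain ⟨d, hd⟩ : ∃ d : K, detSub L = Submodule.span (𝓞 K) {d} := by
    obtain ⟨e1⟩ := hiso ⟨detSub L, FractionalIdeal.isFractional_of_fg hDfg⟩ (by
      intro h
      apply hD0
      have := congrArg (fun I : FractionalIdeal (nonZeroDivisors (𝓞 K)) K =>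
        (I : Submodule (𝓞 K) K)) h
      simpa using this)
    obtain ⟨c, hc⟩ := detSub_equiv hspan e1
    have hc' := (detSub_smul L (detSub L)).symm.trans hc
    obtain ⟨e2⟩ := hconj
    obtain ⟨n, hn, hn'⟩ := quad_norm hdeg σ hσ (detSub L) hDfg hD0
    have hspan2 : Submodule.span K ((Submodule.span (𝓞 K)
        {v : Fin g → K | ∃ w ∈ L, v = fun i => σ (w i)} : Submodule (𝓞 K) (Fin g → K)) :
        Set (Fin g → K)) = ⊤ := by
      rw [Submodule.span_span_of_tower]
      have H : ∀ w ∈ Submodule.span K (L : Set (Fin g → K)), (fun i => σ (w i)) ∈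
          Submodule.span K {v : Fin g → K | ∃ w ∈ L, v = fun i => σ (w i)} := by
        intro w hw
        induction hw using Submodule.span_induction with
        | mem x hx => exact Submodule.subset_span ⟨x, hx, rfl⟩
        | zero => 
          convert Submodule.zero_mem _
          simp
        | add x y _ _ hx hy =>
          convert Submodule.add_mem _ hx hy
          simp
        | smul r x _ hx =>
          convert Submodule.smul_mem _ (σ r) hx
          simp
      rw [eq_top_iff]
      intro v _
      have := H (fun i => σ.symm (v i)) (by rw [hspan]; trivial)
      simpa using this
    obtain ⟨c₂, hc₂⟩ := detSub_equiv hspan2 e2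
    rw [detSub_sig] at hc₂
    exact principal_of _ _ hD0 g hgodd c c₂ n hc' hc₂ hn hn'
  obtain ⟨m, rfl⟩ : ∃ m, g = m + 1 := ⟨g - 1, by obtain ⟨k, rfl⟩ := hgodd; omega⟩
  have : Module.Finite (𝓞 K) L := Module.Finite.iff_fg.mpr hfg
  have hfr := lattice_finrank hspan
  obtain ⟨I, hI0, ⟨e⟩⟩ := steinitz m hfr
  obtain ⟨e'⟩ := stdLat_equiv (K := K) m I
  obtain ⟨c, hc⟩ := detSub_equiv hspan (e.trans e')
  rw [detSub_stdLat, hd, Submodule.span_mul_span, Set.singleton_mul_singleton] at hc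
  have hIfree : Module.Free (𝓞 K) I := by
    let eI := Submodule.equivMapOfInjective (Algebra.linearMap (𝓞 K) K)
      (IsFractionRing.injective (𝓞 K) K) I
    have hcd : c * d ≠ 0 := by
      intro h
      rw [h] at hc
      apply hI0
      rw [Submodule.span_zero_singleton] at hc
      exact Submodule.map_injective_of_injective (f := Algebra.linearMap (𝓞 K) K)
        (IsFractionRing.injective (𝓞 K) K) (hc.trans (Submodule.map_bot _).symm)
    exact Module.Free.of_equiv ((LinearEquiv.toSpanNonzeroSingleton (𝓞 K) K (c * d) hcd).trans
      ((LinearEquiv.ofEq _ _ hc.symm).trans eI.symm))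
  have hfree : Module.Free (𝓞 K) L := Module.Free.of_equiv e.symm
  exact ⟨(Module.finBasisOfFinrankEq (𝓞 K) L hfr).equivFun⟩
end

section
/- Let σ be the nontrivial automorphism of K over ℚ, let 𝔞 be a nonzero fractional ideal of 𝓞_K with absolute norm N = N(𝔞) ∈ ℚ_{>0}, let (x, y) be a K-basis of K², and let L = 𝓞_K·x + 𝔞·y ⊆ K². Let H : K² × K² → K be a σ-hermitian form: K-linear in the first variable, σ-semilinear in the second (H(v, c·w) = σ(c)·H(v,w)), with σ(H(v,w)) = H(w,v). Assume H(u,v) ∈ 𝓞_K for all u, v ∈ L, and that N·(H(x,x)·H(y,y) − H(x,y)·H(y,x)) = 1. Then there exists a K-linear automorphism φ of K² such that φ maps σ(L) (the image of L under coordinatewise σ) onto σ(𝔞)·L (the submodule generated by {σ(a)·v : a ∈ 𝔞, v ∈ L}) and such that N⁻¹·H(φ(u), φ(v)) = σ(H(σ(u), σ(v))) for all u, v ∈ K², where σ acts coordinatewise on K². In other words, the conjugate hermitian lattice (σ(L), H̄) is isometric to (σ(𝔞)·L, N⁻¹·H). -/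
open NumberField

open scoped Pointwise

section aux
variable {K : Type*} [Field K] [NumberField K]

lemma aux_gal (hdeg : Module.finrank ℚ K = 2) (σ : K ≃ₐ[ℚ] K) (hσ : σ ≠ AlgEquiv.refl) :
    (∀ z, σ (σ z) = z) ∧ ∀ z, algebraMap ℚ K (Algebra.norm ℚ z) = z * σ z := by
  classical
  have : Algebra.IsQuadraticExtension ℚ K := { finrank_eq_two' := hdeg }
  have hcard : Fintype.card (K ≃ₐ[ℚ] K) = 2 := by
    rw [← Nat.card_eq_fintype_card, IsGalois.card_aut_eq_finrank, hdeg]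
  have hσ1 : σ ≠ 1 := hσ
  have huniv : (Finset.univ : Finset (K ≃ₐ[ℚ] K)) = {1, σ} := by
    symm
    apply Finset.eq_univ_of_card
    rw [hcard, Finset.card_pair hσ1.symm]
  refine ⟨fun z => ?_, fun z => ?_⟩
  · have h : σ ^ 2 = 1 := by rw [← hcard]; exact pow_card_eq_one
    have := congrArg (fun f : K ≃ₐ[ℚ] K => f z) h
    simpa [pow_two] using this
  · rw [Algebra.norm_eq_prod_automorphisms, huniv, Finset.prod_pair hσ1.symm]
    simp

lemma aux_ideal_s15 (hdeg : Module.finrank ℚ K = 2) (σ : K ≃ₐ[ℚ] K) (hσ : σ ≠ AlgEquiv.refl)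
    (I : Ideal (𝓞 K)) (hI : I ≠ ⊥) :
    (∀ a ∈ I, ∀ b ∈ I, ∃ m : 𝓞 K, (algebraMap (𝓞 K) K a) * σ (algebraMap (𝓞 K) K b) = (Ideal.absNorm I : K) * algebraMap (𝓞 K) K m) ∧
    (∀ M : Submodule (𝓞 K) K, (∀ a ∈ I, ∀ b ∈ I, (algebraMap (𝓞 K) K a) * σ (algebraMap (𝓞 K) K b) ∈ M) →
      (Ideal.absNorm I : K) ∈ M) := by
  obtain ⟨hinv, hnorm⟩ := aux_gal hdeg σ hσ
  let τ : 𝓞 K ≃ₐ[ℤ] 𝓞 K := galRestrict ℤ ℚ K (𝓞 K) σ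
  have hτ : ∀ z : 𝓞 K, algebraMap (𝓞 K) K (τ z) = σ (algebraMap (𝓞 K) K z) := fun z => algebraMap_galRestrict_apply ℤ σ z
  have hnormτ : ∀ z : 𝓞 K, ((Algebra.norm ℤ z : ℤ) : 𝓞 K) = z * τ z := by
    intro z
    apply RingOfIntegers.ext
    have := hnorm (algebraMap (𝓞 K) K z)
    rw [← Algebra.coe_norm_int] at this
    simp only [map_mul, hτ]
    rw [← this]; simp
  have hrel := Ideal.relNorm_int (𝓞 K) I
  rw [Ideal.relNorm_apply] at hrel
  set n := Ideal.absNorm I with hn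
  have hmem : (n : ℤ) ∈ Ideal.span (Algebra.intNorm ℤ (𝓞 K) '' (I : Set (𝓞 K))) := by
    rw [hrel]; exact Ideal.mem_span_singleton_self _
  have key : ∀ M : Ideal (𝓞 K), (∀ a ∈ I, a * τ a ∈ M) → (n : 𝓞 K) ∈ M := by
    intro M hM
    have hle : Ideal.span (Algebra.intNorm ℤ (𝓞 K) '' (I : Set (𝓞 K))) ≤
        M.comap (algebraMap ℤ (𝓞 K)) := by
      rw [Ideal.span_le]
      rintro _ ⟨a, ha, rfl⟩
      have := hM a ha
      rw [← hnormτ] at this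
      simpa [Algebra.intNorm_eq_norm] using this
    simpa using hle hmem
  have hle : Ideal.span {(n : 𝓞 K)} ≤ I * I.map τ := by
    rw [Ideal.span_singleton_le_iff_mem]
    exact key _ fun a ha => Ideal.mul_mem_mul ha (Ideal.mem_map_of_mem _ ha)
  have hn0 : n ≠ 0 := by rw [hn, Ne, Ideal.absNorm_eq_zero_iff]; exact hI
  have hmapn : Ideal.absNorm (I.map τ) = n := by
    rw [← Ideal.absNorm_relNorm ℤ, Ideal.relNorm_map_algEquiv, Ideal.absNorm_relNorm]
  have heq : I * I.map τ = Ideal.span {(n : 𝓞 K)} := by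
    obtain ⟨J, hJ⟩ := Ideal.dvd_iff_le.mpr hle
    have h1 := congrArg Ideal.absNorm hJ
    rw [map_mul, map_mul, hmapn, Ideal.absNorm_span_singleton] at h1
    have h2 : Algebra.norm ℤ (n : 𝓞 K) = (n : ℤ) ^ 2 := by
      have := Algebra.norm_algebraMap (R := ℤ) (S := 𝓞 K) (n : ℤ)
      rw [RingOfIntegers.rank, hdeg] at this
      simpa using this
    rw [h2] at h1
    have h3 : n * n = n * n * Ideal.absNorm J := by
      rw [← hn] at h1
      rw [← h1]
      simp [pow_two, Int.natAbs_mul]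
    have h4 : Ideal.absNorm J = 1 := by
      have : 0 < n * n := by positivity
      nlinarith
    rw [Ideal.absNorm_eq_one_iff] at h4
    rw [hJ, h4, Ideal.mul_top]
  constructor
  · intro a ha b hb
    have : a * τ b ∈ Ideal.span {(n : 𝓞 K)} := by
      rw [← heq]; exact Ideal.mul_mem_mul ha (Ideal.mem_map_of_mem _ hb)
    obtain ⟨m, hm⟩ := Ideal.mem_span_singleton.mp this
    refine ⟨m, ?_⟩
    have := congrArg (algebraMap (𝓞 K) K) hm
    simpa [hτ] using this
  · intro M hM
    have := key (M.comap (Algebra.linearMap (𝓞 K) K)) (fun a ha => by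
      have := hM a ha a ha
      simpa [hτ] using this)
    simpa using this

lemma aux_frac (hdeg : Module.finrank ℚ K = 2) (σ : K ≃ₐ[ℚ] K) (hσ : σ ≠ AlgEquiv.refl)
    (𝔞 : FractionalIdeal (nonZeroDivisors (𝓞 K)) K) (h𝔞 : 𝔞 ≠ 0) :
    (∀ a ∈ 𝔞, ∀ b ∈ 𝔞, ∃ m : 𝓞 K, a * σ b = ((FractionalIdeal.absNorm 𝔞 : ℚ) : K) * algebraMap (𝓞 K) K m) ∧
    (∀ M : Submodule (𝓞 K) K, (∀ a ∈ 𝔞, ∀ b ∈ 𝔞, a * σ b ∈ M) →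
      ((FractionalIdeal.absNorm 𝔞 : ℚ) : K) ∈ M) := by
  obtain ⟨hinv, hnorm⟩ := aux_gal hdeg σ hσ
  have hI : 𝔞.num ≠ ⊥ := by
    intro h; apply h𝔞
    exact FractionalIdeal.zero_of_num_eq_bot zero_notMem_nonZeroDivisors h
  obtain ⟨h1, h2⟩ := aux_ideal_s15 hdeg σ hσ 𝔞.num hI
  rw [FractionalIdeal.absNorm_eq]
  set n := Ideal.absNorm 𝔞.num
  set d : 𝓞 K := (𝔞.den : 𝓞 K) with hd
  have hd0 : (algebraMap (𝓞 K) K d) ≠ 0 := by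
    have : d ≠ 0 := nonZeroDivisors.coe_ne_zero _
    simpa using this
  have hσd0 : σ (algebraMap (𝓞 K) K d) ≠ 0 := by simpa using hd0
  have hnd : ((Algebra.norm ℤ d : ℤ) : K) = (algebraMap (𝓞 K) K d) * σ (algebraMap (𝓞 K) K d) := by
    rw [← hnorm, ← Algebra.coe_norm_int]; simp
  have habs : ∃ ε : ℤ, ε * ε = 1 ∧ |Algebra.norm ℤ d| = ε * Algebra.norm ℤ d := by
    rcases abs_choice (Algebra.norm ℤ d) with h | h
    · exact ⟨1, by simp, by simpa using h⟩
    · exact ⟨-1, by simp, by simpa using h⟩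
  obtain ⟨ε, hε, habs⟩ := habs
  have hεK : (ε : K) * ε = 1 := by exact_mod_cast hε
  have hε0 : (ε : K) ≠ 0 := left_ne_zero_of_mul_eq_one hεK
  have hNeq : (((n : ℚ) / ((|Algebra.norm ℤ d| : ℤ) : ℚ) : ℚ) : K) = ε * n / ((algebraMap (𝓞 K) K d) * σ (algebraMap (𝓞 K) K d)) := by
    rw [habs]; push_cast; rw [hnd]
    field_simp
    linear_combination (-(n : K)) * hεK
  have hnum : ∀ a : K, a ∈ 𝔞 ↔ ∃ i ∈ 𝔞.num, (algebraMap (𝓞 K) K d) * a = algebraMap (𝓞 K) K i := by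
    intro a
    have hden := FractionalIdeal.den_mul_self_eq_num 𝔞
    constructor
    · intro ha
      have : (𝔞.den) • a ∈ 𝔞.den • (𝔞 : Submodule (𝓞 K) K) :=
        Submodule.smul_mem_pointwise_smul _ _ _ ha
      rw [hden] at this
      obtain ⟨i, hi, hi'⟩ := this
      exact ⟨i, hi, by
        rw [Algebra.linearMap_apply] at hi'
        rw [hi', Submonoid.smul_def, Algebra.smul_def]⟩
    · rintro ⟨i, hi, hia⟩
      have : (algebraMap (𝓞 K) K i) ∈ 𝔞.den • (𝔞 : Submodule (𝓞 K) K) := by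
        rw [hden]; exact ⟨i, hi, rfl⟩
      obtain ⟨b, hb, hb'⟩ := this
      have : (algebraMap (𝓞 K) K d) * b = algebraMap (𝓞 K) K i := by
        rw [← hb']; simp [Algebra.smul_def, hd]
      have : b = a := mul_left_cancel₀ hd0 (this.trans hia.symm)
      rw [← this]; exact hb
  rw [hNeq]
  constructor
  · intro a ha b hb
    obtain ⟨i, hi, hia⟩ := (hnum a).1 ha
    obtain ⟨j, hj, hjb⟩ := (hnum b).1 hb
    obtain ⟨m, hm⟩ := h1 i hi j hj
    refine ⟨ε * m, ?_⟩
    rw [← hia, ← hjb, map_mul] at hm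
    rw [map_mul, map_intCast]
    field_simp
    linear_combination hm - (n : K) * m * hεK
  · intro M hM
    let f : K →ₗ[𝓞 K] K := LinearMap.mulLeft (𝓞 K) ((ε : K) / ((algebraMap (𝓞 K) K d) * σ (algebraMap (𝓞 K) K d)))
    have := h2 (M.comap f) (fun i hi j hj => by
      have ha := hM ((algebraMap (𝓞 K) K i) / d) ((hnum _).2 ⟨i, hi, by field_simp⟩) ((algebraMap (𝓞 K) K j) / d)
        ((hnum _).2 ⟨j, hj, by field_simp⟩)
      have := M.smul_mem (ε : 𝓞 K) ha
      rw [Submodule.mem_comap]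
      convert this using 1
      simp only [f, LinearMap.mulLeft_apply, Algebra.smul_def, map_div₀, map_intCast]
      field_simp)
    rw [Submodule.mem_comap] at this
    convert this using 1
    simp only [f, LinearMap.mulLeft_apply]
    field_simp
end aux

/-- Let `K` be an imaginary quadratic field, `σ` the nontrivial automorphism
of `K/ℚ`, `𝔞` a nonzero fractional ideal of norm `N`, `(x, y)` a `K`-basis of `K²`, and
`L = 𝓞_K·x + 𝔞·y`.  If `H` is a `σ`-hermitian form on `K²` that is integral on `L` and
satisfies `N·det(Gram(x,y)) = 1`, then the conjugate hermitian lattice `(σ(L), H̄)` is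
isometric to `(σ(𝔞)·L, N⁻¹·H)`. -/
theorem stmt_15
    (K : Type*) [Field K] [NumberField K]
    (hdeg : Module.finrank ℚ K = 2)
    (hcplx : IsEmpty (K →+* ℝ))
    (σ : K ≃ₐ[ℚ] K) (hσ : σ ≠ AlgEquiv.refl)
    (𝔞 : FractionalIdeal (nonZeroDivisors (𝓞 K)) K) (h𝔞 : 𝔞 ≠ 0)
    (N : ℚ) (hN : N = FractionalIdeal.absNorm 𝔞)
    (x y : Fin 2 → K)
    (hbasis : LinearIndependent K ![x, y])
    (hspan : Submodule.span K {x, y} = ⊤)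
    (L : Submodule (𝓞 K) (Fin 2 → K))
    (hL : L = Submodule.span (𝓞 K) ({x} ∪ {v : Fin 2 → K | ∃ a ∈ 𝔞, v = a • y}))
    (H : (Fin 2 → K) → (Fin 2 → K) → K)
    (hlin₁ : ∀ (c : K) (u u' v : Fin 2 → K), H (c • u + u') v = c * H u v + H u' v)
    (hlin₂ : ∀ (c : K) (u v v' : Fin 2 → K), H u (c • v + v') = σ c * H u v + H u v')
    (hherm : ∀ u v, σ (H u v) = H v u)
    (hint : ∀ u ∈ L, ∀ v ∈ L, ∃ c : 𝓞 K, H u v = algebraMap (𝓞 K) K c)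
    (hdet : (N : K) * (H x x * H y y - H x y * H y x) = 1) :
    ∃ φ : (Fin 2 → K) ≃ₗ[K] (Fin 2 → K),
      (⇑φ '' {v : Fin 2 → K | ∃ w ∈ L, v = fun i => σ (w i)} =
        (Submodule.span (𝓞 K) {u : Fin 2 → K | ∃ a ∈ 𝔞, ∃ v ∈ L, u = σ a • v} :
          Set (Fin 2 → K))) ∧
      ∀ u v : Fin 2 → K,
        (N : K)⁻¹ * H (φ u) (φ v) = σ (H (fun i => σ (u i)) (fun i => σ (v i))) := by
  obtain ⟨hinv, -⟩ := aux_gal hdeg σ hσ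
  obtain ⟨F1, F2⟩ := aux_frac hdeg σ hσ 𝔞 h𝔞
  rw [← hN] at F1 F2
  have hN0 : (N : K) ≠ 0 := left_ne_zero_of_mul_eq_one hdet
  have hσN : σ (N : K) = N := map_ratCast σ N
  -- H expansions
  have H0l : ∀ v, H 0 v = 0 := fun v => by
    have := hlin₁ 1 0 0 v
    simpa using this
  have H0r : ∀ v, H v 0 = 0 := fun v => by
    have := hlin₂ 1 v 0 0
    simpa using this
  have Hsl : ∀ c u v, H (c • u) v = c * H u v := fun c u v => by
    have := hlin₁ c u 0 v
    simpa [H0l] using this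
  have Hsr : ∀ c u v, H u (c • v) = σ c * H u v := fun c u v => by
    have := hlin₂ c u v 0
    simpa [H0r] using this
  have Hexp : ∀ s t s' t' : K, ∀ u w : Fin 2 → K, H (s • u + t • w) (s' • u + t' • w) =
      s * (σ s' * H u u + σ t' * H u w) + t * (σ s' * H w u + σ t' * H w w) := by
    intro s t s' t' u w
    rw [hlin₁, Hsl, hlin₂, hlin₂, Hsr, Hsr]
  have hp : σ (H x x) = H x x := hherm x x
  have hr : σ (H y y) = H y y := hherm y y
  have hq : σ (H x y) = H y x := hherm x y
  have hq' : σ (H y x) = H x y := hherm y x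
  -- coordinates
  have hcoord : ∀ v : Fin 2 → K, ∃ s t : K, v = s • x + t • y := by
    intro v
    have : v ∈ Submodule.span K {x, y} := by rw [hspan]; trivial
    obtain ⟨s, t, h⟩ := Submodule.mem_span_pair.1 this
    exact ⟨s, t, h.symm⟩
  have hli : ∀ s t : K, s • x + t • y = 0 → s = 0 ∧ t = 0 :=
    LinearIndependent.pair_iff.1 hbasis
  -- coordinatewise conjugation
  let C : (Fin 2 → K) → (Fin 2 → K) := fun v i => σ (v i)
  have hCC : ∀ v, C (C v) = v := fun v => by funext i; exact hinv _
  have hClin : ∀ s t u w, C (s • u + t • w) = σ s • C u + σ t • C w := by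
    intro s t u w; funext i; simp [C]
  have hC0 : C 0 = 0 := by funext i; simp [C]
  -- L
  have hLmem : ∀ w, w ∈ L ↔ ∃ c : 𝓞 K, ∃ a ∈ 𝔞, w = (algebraMap (𝓞 K) K c) • x + a • y := by
    intro w
    rw [hL]
    constructor
    · intro hw
      induction hw using Submodule.span_induction with
      | mem v hv =>
        rcases hv with hv | ⟨a, ha, hv⟩
        · rw [Set.mem_singleton_iff] at hv
          exact ⟨1, 0, 𝔞.zero_mem, by simp [hv]⟩
        · exact ⟨0, a, ha, by simp [hv]⟩
      | zero => exact ⟨0, 0, 𝔞.zero_mem, by simp⟩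
      | add u v _ _ hu hv =>
        obtain ⟨c, a, ha, rfl⟩ := hu
        obtain ⟨c', a', ha', rfl⟩ := hv
        refine ⟨c + c', a + a', Submodule.add_mem (𝔞 : Submodule (𝓞 K) K) ha ha', ?_⟩
        rw [map_add]; module
      | smul e v _ hv =>
        obtain ⟨c, a, ha, rfl⟩ := hv
        refine ⟨e * c, e • a, Submodule.smul_mem (𝔞 : Submodule (𝓞 K) K) e ha, ?_⟩
        rw [map_mul, smul_add, Algebra.smul_def e a, algebra_compatible_smul K e,
          algebra_compatible_smul K e, smul_smul, smul_smul]
    · rintro ⟨c, a, ha, rfl⟩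
      refine Submodule.add_mem _ ?_ (Submodule.subset_span (Or.inr ⟨a, ha, rfl⟩))
      have := Submodule.smul_mem (Submodule.span (𝓞 K)
        ({x} ∪ {v : Fin 2 → K | ∃ a ∈ 𝔞, v = a • y})) c (Submodule.subset_span (Or.inl rfl))
      rwa [algebra_compatible_smul K c] at this
  have hxL : x ∈ L := (hLmem x).2 ⟨1, 0, 𝔞.zero_mem, by simp⟩
  have hyL : ∀ a ∈ 𝔞, a • y ∈ L := fun a ha => (hLmem _).2 ⟨0, a, ha, by simp⟩
  -- integrality
  obtain ⟨p, hpO⟩ := hint x hxL x hxL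
  have hqO : ∀ a ∈ 𝔞, ∃ c : 𝓞 K, σ a * H x y = algebraMap (𝓞 K) K c := fun a ha => by
    obtain ⟨c, hc⟩ := hint x hxL _ (hyL a ha)
    exact ⟨c, by rw [← hc, Hsr]⟩
  have hq'O : ∀ a ∈ 𝔞, ∃ c : 𝓞 K, a * H y x = algebraMap (𝓞 K) K c := fun a ha => by
    obtain ⟨c, hc⟩ := hint _ (hyL a ha) x hxL
    exact ⟨c, by rw [← hc, Hsl]⟩
  have hrO : ∀ a ∈ 𝔞, ∀ b ∈ 𝔞, ∃ c : 𝓞 K, a * σ b * H y y = algebraMap (𝓞 K) K c := fun a ha b hb => by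
    obtain ⟨c, hc⟩ := hint _ (hyL a ha) _ (hyL b hb)
    exact ⟨c, by rw [← hc, Hsl, Hsr]; ring⟩
  have hσO : ∀ c : 𝓞 K, ∃ c' : 𝓞 K, σ (algebraMap (𝓞 K) K c) = algebraMap (𝓞 K) K c' := fun c =>
    ⟨galRestrict ℤ ℚ K (𝓞 K) σ c, (algebraMap_galRestrict_apply ℤ σ c).symm⟩
  -- σ(𝔞) as a submodule
  let S : Submodule (𝓞 K) K :=
    { carrier := {z | σ z ∈ 𝔞}
      zero_mem' := by simpa using 𝔞.zero_mem
      add_mem' := fun {u v} hu hv => by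
        rw [Set.mem_ofPred_eq, map_add]
        exact Submodule.add_mem (𝔞 : Submodule (𝓞 K) K) hu hv
      smul_mem' := fun c v hv => by
        obtain ⟨c', hc'⟩ := hσO c
        rw [Set.mem_ofPred_eq, Algebra.smul_def, map_mul, hc', ← Algebra.smul_def]
        exact Submodule.smul_mem (𝔞 : Submodule (𝓞 K) K) c' hv }
  have hSσ : ∀ a ∈ 𝔞, σ a ∈ S := fun a ha => by
    change σ (σ a) ∈ 𝔞
    rwa [hinv]
  have hNinv : ∀ z : K, (∀ a ∈ 𝔞, ∃ c : 𝓞 K, a * z = algebraMap (𝓞 K) K c) → N * z ∈ S := by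
    intro z hz
    have := F2 (S.comap (LinearMap.mulRight (𝓞 K) z)) (fun a ha b hb => by
      obtain ⟨c, hc⟩ := hz a ha
      rw [Submodule.mem_comap, LinearMap.mulRight_apply]
      have h := S.smul_mem c (hSσ b hb)
      rw [Algebra.smul_def, ← hc] at h
      convert h using 1
      ring)
    simpa using this
  have hNq' : N * H y x ∈ S := hNinv _ hq'O
  have hNr' : ∀ b ∈ 𝔞, N * (σ b * H y y) ∈ S := fun b hb => hNinv _ fun a ha => by
    obtain ⟨c, hc⟩ := hrO a ha b hb
    exact ⟨c, by rw [← hc]; ring⟩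
  have hNr : ∃ c : 𝓞 K, N * H y y = algebraMap (𝓞 K) K c := by
    have := F2 ((1 : Submodule (𝓞 K) K).comap (LinearMap.mulRight (𝓞 K) (H y y)))
      (fun a ha b hb => by
        obtain ⟨c, hc⟩ := hrO a ha b hb
        rw [Submodule.mem_comap, LinearMap.mulRight_apply, hc]
        exact Submodule.mem_one.2 ⟨c, rfl⟩)
    rw [Submodule.mem_comap, LinearMap.mulRight_apply] at this
    obtain ⟨c, hc⟩ := Submodule.mem_one.1 this
    exact ⟨c, hc.symm⟩
  -- the map
  let P : Fin 2 → K := ((N : K) * H y x) • x + (-(N : K) * H x x) • y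
  let Q : Fin 2 → K := ((N : K) * H y y) • x + (-(N : K) * H x y) • y
  have hPQ : ∀ s t : K, s • P + t • Q =
      ((N : K) * (s * H y x + t * H y y)) • x + (-(N : K) * (s * H x x + t * H x y)) • y := by
    intro s t; simp only [P, Q]; module
  have li1 : LinearIndependent K ![C x, C y] := by
    rw [LinearIndependent.pair_iff]
    intro s t h
    have h' := congrArg C h
    rw [hClin, hCC, hCC, hC0] at h'
    have := hli _ _ h'
    simpa using this
  have li2 : LinearIndependent K ![P, Q] := by
    rw [LinearIndependent.pair_iff]
    intro s t h
    rw [hPQ] at h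
    obtain ⟨h1, h2⟩ := hli _ _ h
    constructor
    · linear_combination (-s) * hdet - H x y * h1 - H y y * h2
    · linear_combination (-t) * hdet + H x x * h1 + H y x * h2
  have hcard : Fintype.card (Fin 2) = Module.finrank K (Fin 2 → K) := by simp
  let b1 := basisOfLinearIndependentOfCardEqFinrank li1 hcard
  let b2 := basisOfLinearIndependentOfCardEqFinrank li2 hcard
  let φ : (Fin 2 → K) ≃ₗ[K] (Fin 2 → K) := b1.equiv b2 (Equiv.refl _)
  have hφx : φ (C x) = P := by
    have := b1.equiv_apply (b' := b2) 0 (Equiv.refl _)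
    simpa [b1, b2] using this
  have hφy : φ (C y) = Q := by
    have := b1.equiv_apply (b' := b2) 1 (Equiv.refl _)
    simpa [b1, b2] using this
  have hφ : ∀ s t : K, φ (s • C x + t • C y) = s • P + t • Q := by
    intro s t; rw [map_add, map_smul, map_smul, hφx, hφy]
  refine ⟨φ, ?_, ?_⟩
  · set T := Submodule.span (𝓞 K) {u : Fin 2 → K | ∃ a ∈ 𝔞, ∃ v ∈ L, u = σ a • v} with hT
    have hTx : ∀ z ∈ S, z • x ∈ T := fun z hz =>
      Submodule.subset_span ⟨σ z, hz, x, hxL, by rw [hinv]⟩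
    have hTy : ∀ m : 𝓞 K, ((N : K) * algebraMap (𝓞 K) K m) • y ∈ T := by
      intro m
      have := F2 (T.comap ((LinearMap.toSpanSingleton K (Fin 2 → K) y).restrictScalars (𝓞 K)))
        (fun a ha b hb => by
          rw [Submodule.mem_comap]
          refine Submodule.subset_span ⟨b, hb, a • y, hyL a ha, ?_⟩
          simp [smul_smul, mul_comm])
      rw [Submodule.mem_comap] at this
      have h := T.smul_mem m this
      rw [algebra_compatible_smul K m] at h
      simpa [smul_smul, mul_comm] using h
    have himg : ∀ z, z ∈ ⇑φ '' {v : Fin 2 → K | ∃ w ∈ L, v = fun i => σ (w i)} ↔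
        ∃ c : 𝓞 K, ∃ s ∈ S, z = (algebraMap (𝓞 K) K c) • P + s • Q := by
      intro z
      constructor
      · rintro ⟨_, ⟨w, hw, rfl⟩, rfl⟩
        obtain ⟨c, a, ha, rfl⟩ := (hLmem w).1 hw
        obtain ⟨c', hc'⟩ := hσO c
        refine ⟨c', σ a, hSσ a ha, ?_⟩
        rw [← hφ, ← hc', ← hClin]
      · rintro ⟨c, s, hs, rfl⟩
        obtain ⟨c', hc'⟩ := hσO c
        refine ⟨(algebraMap (𝓞 K) K c) • C x + s • C y, ⟨(algebraMap (𝓞 K) K c') • x + σ s • y,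
          (hLmem _).2 ⟨c', σ s, hs, rfl⟩, ?_⟩, hφ _ _⟩
        change _ = C _
        rw [hClin, ← hc', hinv, hinv]
    ext z
    rw [himg]
    constructor
    · rintro ⟨c, s, hs, rfl⟩
      rw [hPQ]
      refine T.add_mem (hTx _ ?_) ?_
      · have h1 := S.smul_mem c hNq'
        have h2 := hNr' (σ s) hs
        rw [hinv] at h2
        rw [Algebra.smul_def] at h1
        convert S.add_mem h1 h2 using 1
        ring
      · obtain ⟨c', hc'⟩ := hqO (σ s) hs
        rw [hinv] at hc'
        have := hTy (-(c * p + c'))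
        convert this using 2
        rw [map_neg, map_add, map_mul, ← hc', ← hpO]
        ring
    · intro hz
      rw [SetLike.mem_coe, hT] at hz
      induction hz using Submodule.span_induction with
      | mem u hu =>
        obtain ⟨a, ha, v, hv, rfl⟩ := hu
        obtain ⟨c, b, hb, rfl⟩ := (hLmem v).1 hv
        obtain ⟨m, hm⟩ := F1 b hb a ha
        obtain ⟨e, he⟩ := hqO a ha
        obtain ⟨r, hrr⟩ := hNr
        refine ⟨-(c * e) - m * r, (algebraMap (𝓞 K) K p) * algebraMap (𝓞 K) K c * σ a + (algebraMap (𝓞 K) K m) * (N * H y x), ?_, ?_⟩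
        · have h1 := S.smul_mem (p * c) (hSσ a ha)
          have h2 := S.smul_mem m hNq'
          rw [Algebra.smul_def] at h1 h2
          rw [map_mul] at h1
          exact S.add_mem h1 h2
        · rw [hPQ, map_sub, map_neg, map_mul, map_mul, ← he, ← hrr, ← hpO, smul_add, smul_smul,
            smul_smul, mul_comm (σ a) b, hm]
          congr 2
          · linear_combination (-(σ a * algebraMap (𝓞 K) K c)) * hdet
          · linear_combination (-(N * algebraMap (𝓞 K) K m)) * hdet
      | zero => exact ⟨0, 0, S.zero_mem, by simp⟩
      | add u v _ _ hu hv =>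
        obtain ⟨c, s, hs, rfl⟩ := hu
        obtain ⟨c', s', hs', rfl⟩ := hv
        refine ⟨c + c', s + s', S.add_mem hs hs', ?_⟩
        rw [map_add]; module
      | smul e v _ hv =>
        obtain ⟨c, s, hs, rfl⟩ := hv
        refine ⟨e * c, e • s, S.smul_mem e hs, ?_⟩
        rw [map_mul, smul_add, Algebra.smul_def e s, algebra_compatible_smul K e,
          algebra_compatible_smul K e, smul_smul, smul_smul]
  · intro u v
    obtain ⟨s, t, hu⟩ := hcoord (C u)
    obtain ⟨s', t', hv⟩ := hcoord (C v)
    have hu' : u = σ s • C x + σ t • C y := by rw [← hClin, ← hu, hCC]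
    have hv' : v = σ s' • C x + σ t' • C y := by rw [← hClin, ← hv, hCC]
    change _ = σ (H (C u) (C v))
    rw [hu, hv, hu', hv', hφ, hφ, hPQ, hPQ, Hexp, Hexp]
    simp only [map_add, map_mul, map_neg, hinv, hp, hq, hq', hr, hσN]
    rw [inv_mul_eq_iff_eq_mul₀ hN0]
    linear_combination ((N : K) * (σ s * (s' * H x x + t' * H y x) +
      σ t * (s' * H x y + t' * H y y))) * hdet
end

section
/- Let σ be the nontrivial automorphism of K over ℚ, restricting to a ring automorphism of 𝓞_K, and let τ : K →+* ℂ be an embedding. Let M be a g×g matrix with entries in 𝓞_K which is σ-hermitian (the σ-entrywise image of M transposed equals M) and positive definite (its entrywise image in M_g(ℂ) under τ is a positive definite hermitian matrix). Then there exists a g×g matrix P with entries in 𝓞_K with det(P) ≠ 0 and positive integers d₁, …, d_g such that σ(P)ᵀ·M·P is the diagonal matrix with diagonal entries d₁, …, d_g (viewed in 𝓞_K). -/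
open NumberField
open scoped ComplexOrder

open Matrix in
lemma diag_aux {K : Type*} [Field K] [StarRing K] (τ : K →+* ℂ)
    (hτ : ∀ x, τ (star x) = star (τ x)) (n : Type) [Finite n] :
    ∀ [Fintype n] [DecidableEq n] (M : Matrix n n K), Mᴴ = M → (M.map τ).PosDef →
      ∃ P : Matrix n n K, P.det ≠ 0 ∧ ∃ e : n → K, Pᴴ * M * P = diagonal e := by
  induction n using Finite.induction_empty_option with
  | of_equiv f ih =>
    rename_i α β
    intro _ _ M hM hp
    classical
    haveI : Fintype α := Fintype.ofEquiv _ f.symm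
    obtain ⟨P, hP, e, he⟩ := ih (M.submatrix f f) (by rw [conjTranspose_submatrix, hM])
      (hp.submatrix f.injective)
    refine ⟨P.submatrix f.symm f.symm, by rwa [det_submatrix_equiv_self], e ∘ f.symm, ?_⟩
    have hM' : M = (M.submatrix f f).submatrix f.symm f.symm := by simp
    rw [hM', conjTranspose_submatrix, submatrix_mul_equiv, submatrix_mul_equiv, he]
    simp
  | h_empty =>
    intro _ _ M hM hp
    exact ⟨1, by simp, 0, by ext i; exact i.elim⟩
  | h_option ih =>
    rename_i α _
    intro _ _ M hM hp
    classical
    let f : α ⊕ Unit ≃ Option α := (Equiv.optionEquivSumPUnit α).symm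
    set N := M.submatrix f f with hN
    have hNh : Nᴴ = N := by rw [conjTranspose_submatrix, hM]
    have hNp : (N.map τ).PosDef := hp.submatrix f.injective
    set A := N.toBlocks₁₁ with hA
    set B := N.toBlocks₁₂ with hB
    set D := N.toBlocks₂₂ with hD
    have hAh : Aᴴ = A := by
      ext i j; exact congrFun (congrFun hNh (Sum.inl i)) (Sum.inl j)
    have hBh : N.toBlocks₂₁ = Bᴴ := by
      ext i j; exact (congrFun (congrFun hNh (Sum.inr i)) (Sum.inl j)).symm
    have hAp : (A.map τ).PosDef := hNp.submatrix Sum.inl_injective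
    have hNe : N = fromBlocks A B Bᴴ D := by rw [← hBh]; exact (fromBlocks_toBlocks N).symm
    have hdet : IsUnit A.det := by
      have h1 := hAp.det_pos.ne'
      have h2 : (A.map τ).det = τ A.det := (RingHom.map_det τ A).symm
      rw [h2] at h1
      exact isUnit_iff_ne_zero.2 fun h => h1 (by rw [h, map_zero])
    obtain ⟨P, hP, e, he⟩ := ih A hAh hAp
    set Q : Matrix (α ⊕ Unit) (α ⊕ Unit) K := fromBlocks P (-(A⁻¹ * B)) 0 1 with hQ
    have hQN : Qᴴ * N * Q = diagonal (Sum.elim e fun _ => (D - Bᴴ * A⁻¹ * B) () ()) := by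
      have h1 : A * (A⁻¹ * B) = B := by rw [← Matrix.mul_assoc, mul_nonsing_inv _ hdet, Matrix.one_mul]
      have h2 : (A⁻¹ * B)ᴴ * A = Bᴴ := by
        rw [conjTranspose_mul, conjTranspose_nonsing_inv, hAh, Matrix.mul_assoc,
          nonsing_inv_mul _ hdet, Matrix.mul_one]
      have h3 : diagonal (fun _ : Unit => (D - Bᴴ * A⁻¹ * B) () ()) = D - Bᴴ * A⁻¹ * B := by
        ext i j; cases i; cases j; simp
      rw [← fromBlocks_diagonal, h3, hQ, hNe, fromBlocks_conjTranspose, fromBlocks_multiply,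
        fromBlocks_multiply, ← he]
      congr 1
      · simp
      · simp [Matrix.mul_assoc, h1]
      · simp [-conjTranspose_mul, h2]
      · simp [-conjTranspose_mul, h2]
        rw [conjTranspose_mul, conjTranspose_nonsing_inv, hAh]
        abel
    refine ⟨Q.submatrix f.symm f.symm, ?_, (Sum.elim e fun _ => (D - Bᴴ * A⁻¹ * B) () ()) ∘ f.symm, ?_⟩
    · rw [det_submatrix_equiv_self, hQ, det_fromBlocks_zero₂₁]; simpa using hP
    · have hM' : M = N.submatrix f.symm f.symm := by simp [hN]
      rw [hM', conjTranspose_submatrix, submatrix_mul_equiv, submatrix_mul_equiv, hQN]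
      simp

/-- Let `K` be an imaginary quadratic field with nontrivial automorphism
`σ` and embedding `τ : K →+* ℂ`.  Every `σ`-hermitian positive definite matrix `M` over
`𝓞 K` can be diagonalized: there are `P` over `𝓞 K` with `det P ≠ 0` and positive integers
`d₁, …, d_g` with `σ(P)ᵀ · M · P = diagonal (d₁, …, d_g)`. -/
theorem stmt_16
    (K : Type*) [Field K] [NumberField K]
    (hdeg : Module.finrank ℚ K = 2)
    (hcplx : IsEmpty (K →+* ℝ))
    (σ : K ≃ₐ[ℚ] K) (hσ : σ ≠ AlgEquiv.refl)
    (τ : K →+* ℂ)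
    (g : ℕ)
    (M : Matrix (Fin g) (Fin g) (𝓞 K))
    (hherm : ∀ i j, σ (algebraMap (𝓞 K) K (M i j)) = algebraMap (𝓞 K) K (M j i))
    (hpos : Matrix.PosDef (M.map fun a => τ (algebraMap (𝓞 K) K a))) :
    ∃ P : Matrix (Fin g) (Fin g) (𝓞 K), P.det ≠ 0 ∧
      ∃ d : Fin g → ℕ, (∀ i, 0 < d i) ∧
        (Matrix.transpose (P.map fun a => σ (algebraMap (𝓞 K) K a))) *
            (M.map fun a => algebraMap (𝓞 K) K a) *
            (P.map fun a => algebraMap (𝓞 K) K a) =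
          Matrix.diagonal fun i => ((d i : ℕ) : K) := by
  classical
  haveI : Algebra.IsQuadraticExtension ℚ K := ⟨hdeg⟩
  haveI : IsGalois ℚ K := { }
  have hcard : Nat.card (K ≃ₐ[ℚ] K) = 2 := by rw [IsGalois.card_aut_eq_finrank, hdeg]
  have hall : ∀ ρ : K ≃ₐ[ℚ] K, ρ ≠ 1 → ρ = σ := by
    intro ρ hρ
    obtain ⟨x, y, hxy, hu⟩ := Nat.card_eq_two_iff.1 hcard
    have key : ∀ z : K ≃ₐ[ℚ] K, z = x ∨ z = y := fun z => by
      have : z ∈ ({x, y} : Set (K ≃ₐ[ℚ] K)) := hu ▸ Set.mem_univ z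
      simpa using this
    have hσ' : σ ≠ 1 := hσ
    rcases key ρ with h | h <;> rcases key σ with h' | h' <;> rcases key 1 with h'' | h'' <;>
      simp_all
  have hτ : ∀ x, τ (σ x) = star (τ x) := by
    obtain ⟨ρ, hρ⟩ := NumberField.ComplexEmbedding.exists_comp_symm_eq_of_comp_eq (k := ℚ) τ
      (NumberField.ComplexEmbedding.conjugate τ) (RingHom.ext fun x => by simp)
    have hne : ρ.symm ≠ 1 := by
      intro h
      have hr : NumberField.ComplexEmbedding.IsReal τ := by
        rw [NumberField.ComplexEmbedding.isReal_iff, ← hρ, h]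
        ext; rfl
      exact hcplx.false hr.embedding
    intro x
    rw [← hall _ hne]
    exact RingHom.congr_fun hρ x
  have hσσ : ∀ x, σ (σ x) = x := fun x => τ.injective (by rw [hτ, hτ, star_star])
  letI : StarRing K :=
    { star := σ
      star_involutive := hσσ
      star_mul := fun a b => by rw [map_mul, mul_comm]
      star_add := map_add σ }
  have hfix : ∀ x : K, IsIntegral ℤ x → σ x = x → 0 < τ x → ∃ d : ℕ, 0 < d ∧ x = d := by
    intro x hx hs hp
    obtain ⟨q, rfl⟩ : x ∈ Set.range (algebraMap ℚ K) := by
      rw [IsGalois.mem_range_algebraMap_iff_fixed]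
      intro ρ
      by_cases h : ρ = 1
      · rw [h]; rfl
      · rw [hall ρ h, hs]
    have hq : IsIntegral ℤ q := (isIntegral_algebraMap_iff (algebraMap ℚ K).injective).1 hx
    obtain ⟨z, rfl⟩ := IsIntegrallyClosed.isIntegral_iff.1 hq
    have hz : 0 < z := by
      have : τ (algebraMap ℚ K (algebraMap ℤ ℚ z)) = ((z : ℝ) : ℂ) := by simp
      rw [this] at hp
      exact_mod_cast hp
    refine ⟨z.toNat, by omega, ?_⟩
    have : ((z.toNat : ℤ) : K) = z := by rw [Int.toNat_of_nonneg hz.le]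
    rw [← Int.cast_natCast, this]; simp
  set M' : Matrix (Fin g) (Fin g) K := M.map fun a => algebraMap (𝓞 K) K a with hM'
  have hMh : M'.conjTranspose = M' := by
    ext i j; exact hherm j i
  have hMp : (M'.map τ).PosDef := hpos
  obtain ⟨Q, hQ, e, he⟩ := diag_aux τ hτ (Fin g) M' hMh hMp
  obtain ⟨b, hb⟩ := IsLocalization.exist_integer_multiples_of_finite (nonZeroDivisors (𝓞 K))
    (fun p : Fin g × Fin g => Q p.1 p.2)
  choose P hP using hb
  have hb0 : algebraMap (𝓞 K) K b ≠ 0 := by simp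
  let P' : Matrix (Fin g) (Fin g) (𝓞 K) := Matrix.of fun i j => P (i, j)
  have hPQ : (P'.map fun a => algebraMap (𝓞 K) K a) = (algebraMap (𝓞 K) K b) • Q := by
    ext i j
    have := hP (i, j)
    simpa [P', Algebra.smul_def] using this
  have hdetK : (P'.map fun a => algebraMap (𝓞 K) K a).det ≠ 0 := by
    rw [hPQ, Matrix.det_smul]
    exact mul_ne_zero (pow_ne_zero _ hb0) hQ
  have hdet : P'.det ≠ 0 := by
    intro h
    apply hdetK
    have := RingHom.map_det (algebraMap (𝓞 K) K) P'
    rw [h, map_zero] at this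
    exact this.symm
  set R : Matrix (Fin g) (Fin g) K := P'.map fun a => algebraMap (𝓞 K) K a with hR
  have hRt : (Matrix.transpose (P'.map fun a => σ (algebraMap (𝓞 K) K a))) = R.conjTranspose := rfl
  set E := R.conjTranspose * M' * R with hE
  have hEd : E = Matrix.diagonal
      (fun i => star (algebraMap (𝓞 K) K b) * algebraMap (𝓞 K) K b * e i) := by
    rw [hE, hPQ, Matrix.conjTranspose_smul, Matrix.smul_mul, Matrix.smul_mul, Matrix.mul_smul, he,
      smul_smul, ← Matrix.diagonal_smul]
    rfl
  have hEh : E.conjTranspose = E := by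
    rw [hE, Matrix.conjTranspose_mul, Matrix.conjTranspose_mul, Matrix.conjTranspose_conjTranspose,
      hMh, Matrix.mul_assoc]
  have hEp : (E.map τ).PosDef := by
    have h1 : E.map τ = (R.map τ).conjTranspose * M'.map τ * R.map τ := by
      rw [hE, Matrix.map_mul, Matrix.map_mul]
      congr 2
      ext i j
      exact hτ _
    rw [h1]
    apply hMp.conjTranspose_mul_mul_same
    apply Matrix.mulVec_injective_of_isUnit
    rw [Matrix.isUnit_iff_isUnit_det]
    have : (R.map τ).det = τ R.det := (RingHom.map_det τ R).symm
    rw [this]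
    exact (isUnit_iff_ne_zero.2 hdetK).map τ
  have hEi : ∀ i, IsIntegral ℤ (E i i) := by
    intro i
    rw [hE, Matrix.mul_apply]
    refine IsIntegral.sum _ fun j _ => ?_
    refine IsIntegral.mul ?_ (RingOfIntegers.isIntegral_coe _)
    rw [Matrix.mul_apply]
    refine IsIntegral.sum _ fun k _ => ?_
    refine IsIntegral.mul ?_ (RingOfIntegers.isIntegral_coe _)
    exact (RingOfIntegers.isIntegral_coe (P' k i)).map (σ.toAlgHom.restrictScalars ℤ)
  have hd : ∀ i, ∃ d : ℕ, 0 < d ∧ E i i = d := fun i =>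
    hfix _ (hEi i) (congrFun (congrFun hEh i) i) (hEp.diag_pos (i := i))
  choose d hd0 hd using hd
  refine ⟨P', hdet, d, hd0, ?_⟩
  rw [hRt]
  change E = _
  ext i j
  by_cases hij : i = j
  · subst hij; rw [hd, Matrix.diagonal_apply_eq]
  · rw [Matrix.diagonal_apply_ne _ hij, hEd, Matrix.diagonal_apply_ne _ hij]
end
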